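/- arXiv:1505.03434 — 6 statements merged into one kernel-verified Lean document; each statement's English description precedes it below -/
import Mathlib

section
/- Let A : ℝ³ → ℝ³ be a smooth vector potential with magnetic field B = ∇×A, and suppose B does not vanish on an open set Ω ⊆ ℝ³; set b = B/‖B‖. Let U ⊆ ℝ³ be open and χ : U → Ω a smooth map with invertible differential such that, for every q̂ ∈ U: (i) ∂₃χ(q̂) = b(χ(q̂)), and (ii) dα_{χ(q̂)}(Dχ(q̂)u, Dχ(q̂)v) = u₁v₂ − u₂v₁ for all u, v ∈ ℝ³ (i.e. χ*(dα) = dq̂₁∧dq̂₂). Then det Dχ(q̂) = ‖B(χ(q̂))‖^{-1} for every q̂ ∈ U. -/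
open Matrix

noncomputable section

/-- The curl `∇ × A` of a vector field on `ℝ³`. -/
def curl (A : (Fin 3 → ℝ) → (Fin 3 → ℝ)) (q : Fin 3 → ℝ) : Fin 3 → ℝ :=
  ![fderiv ℝ (fun x => A x 2) q (Pi.single 1 1) - fderiv ℝ (fun x => A x 1) q (Pi.single 2 1),
    fderiv ℝ (fun x => A x 0) q (Pi.single 2 1) - fderiv ℝ (fun x => A x 2) q (Pi.single 0 1),
    fderiv ℝ (fun x => A x 1) q (Pi.single 0 1) - fderiv ℝ (fun x => A x 0) q (Pi.single 1 1)]

/-- The Euclidean norm on `ℝ³` (as `Fin 3 → ℝ`). -/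
def norm3 (v : Fin 3 → ℝ) : ℝ := Real.sqrt (v ⬝ᵥ v)

/-- The canonical symplectic form on `ℝ⁶ = ℝ³ × ℝ³`:
`ω₀((u₁,u₂),(v₁,v₂)) = ⟨v₁,u₂⟩ − ⟨v₂,u₁⟩`. -/
def omega0 (u v : (Fin 3 → ℝ) × (Fin 3 → ℝ)) : ℝ :=
  v.1 ⬝ᵥ u.2 - v.2 ⬝ᵥ u.1

/-- The adjoint (transpose with respect to the Euclidean dot product) of a continuous
linear map `ℝ³ → ℝ³`. -/
def adjoint3 (L : (Fin 3 → ℝ) →L[ℝ] (Fin 3 → ℝ)) (w : Fin 3 → ℝ) : Fin 3 → ℝ :=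
  fun i => (L (Pi.single i 1)) ⬝ᵥ w

/-!
The determinant of `Dχ` is the triple product of `∂₁χ`, `∂₂χ`, `∂₃χ`. Since `∂₃χ = ‖B‖⁻¹ B`, it
equals `‖B‖⁻¹ ⟨∂₁χ, ∂₂χ × B⟩ = ‖B‖⁻¹ dα(∂₁χ, ∂₂χ)`, and `χ*(dα) = dq̂₁ ∧ dq̂₂` takes the value `1`
on the first two basis vectors.
-/

section TripleProduct

variable {R : Type*} [CommRing R]

theorem det_eq_triple_product (f : (Fin 3 → R) →ₗ[R] Fin 3 → R) :
    LinearMap.det f =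
      f (Pi.single 0 1) ⬝ᵥ f (Pi.single 1 1) ⨯₃ f (Pi.single 2 1) := by
  have rows_eq_transpose :
      ![f (Pi.single 0 1), f (Pi.single 1 1), f (Pi.single 2 1)] = (LinearMap.toMatrix' f)ᵀ := by
    ext j i
    fin_cases j <;> exact (LinearMap.toMatrix'_apply f i _).symm
  rw [triple_product_eq_det, rows_eq_transpose, det_transpose, LinearMap.det_toMatrix']

theorem det_eq_mul_triple_product {f : (Fin 3 → R) →ₗ[R] Fin 3 → R} {c : R} {w : Fin 3 → R}
    (hf : f (Pi.single 2 1) = c • w) :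
    LinearMap.det f = c * (f (Pi.single 0 1) ⬝ᵥ f (Pi.single 1 1) ⨯₃ w) := by
  rw [det_eq_triple_product, hf, map_smul, dotProduct_smul, smul_eq_mul]

theorem statement1_general {f : (Fin 3 → R) →ₗ[R] Fin 3 → R} {c : R} {w : Fin 3 → R}
    (hfield : f (Pi.single 2 1) = c • w)
    (hsymp : ∀ u v : Fin 3 → R, f u ⬝ᵥ f v ⨯₃ w = u 0 * v 1 - u 1 * v 0) :
    LinearMap.det f = c := by
  have area_eq_one : f (Pi.single 0 1) ⬝ᵥ f (Pi.single 1 1) ⨯₃ w = 1 := by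
    simp [hsymp]
  rw [det_eq_mul_triple_product hfield, area_eq_one, mul_one]

end TripleProduct

/-- Straightening a nonvanishing magnetic field: if `χ` straightens the direction `b = B/‖B‖`
(`∂₃χ = b∘χ`) and pulls the magnetic two-form `dα_q(U,V) = ⟨U, V × B(q)⟩` back to
`dq̂₁ ∧ dq̂₂`, then `det Dχ(q̂) = ‖B(χ(q̂))‖⁻¹`. -/
theorem statement1 (A : (Fin 3 → ℝ) → (Fin 3 → ℝ)) (hA : ContDiff ℝ (⊤ : ℕ∞) A)
    (Ω : Set (Fin 3 → ℝ)) (hΩ : IsOpen Ω) (hB : ∀ q ∈ Ω, curl A q ≠ 0)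
    (U : Set (Fin 3 → ℝ)) (hU : IsOpen U)
    (χ : (Fin 3 → ℝ) → (Fin 3 → ℝ)) (hχ : ContDiffOn ℝ (⊤ : ℕ∞) χ U)
    (hmaps : Set.MapsTo χ U Ω)
    (hinv : ∀ qh ∈ U, Function.Bijective (fderiv ℝ χ qh))
    (hfield : ∀ qh ∈ U,
      fderiv ℝ χ qh (Pi.single 2 1) = (norm3 (curl A (χ qh)))⁻¹ • curl A (χ qh))
    (hsymp : ∀ qh ∈ U, ∀ u v : Fin 3 → ℝ,
      (fderiv ℝ χ qh u) ⬝ᵥ crossProduct (fderiv ℝ χ qh v) (curl A (χ qh)) =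
        u 0 * v 1 - u 1 * v 0) :
    ∀ qh ∈ U,
      LinearMap.det ((fderiv ℝ χ qh).toLinearMap) = (norm3 (curl A (χ qh)))⁻¹ :=
  fun qh hq => statement1_general (hfield qh hq) (hsymp qh hq)
end
end

section
/- Let A : ℝ³ → ℝ³ be a smooth vector potential with magnetic field B = ∇×A, and assume B(0) ≠ 0; set b = B/‖B‖ near 0. Then there exist open neighborhoods U and V of 0 in ℝ³ and a smooth diffeomorphism χ : U → V with χ(0) = 0 such that, for every q̂ ∈ U: (i) ∂₃χ(q̂) = b(χ(q̂)), and (ii) dα_{χ(q̂)}(Dχ(q̂)u, Dχ(q̂)v) = u₁v₂ − u₂v₁ for all u, v ∈ ℝ³ (i.e. χ straightens the field direction and pulls the magnetic two-form back to dq̂₁∧dq̂₂). -/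
open Matrix

noncomputable section

/-!
With `l = 1 / ‖B‖`, the field `v = l • B` has a `C^n` flow `φ`: its rescaled integral curves solve
`γ s = x + t ∫₀ˢ v(γ)`, an equation on a Banach space of paths to which the inverse function theorem
applies at `t = 0`. Since `div B = 0` and `B` is in the kernel of the flux form
`(u, v) ↦ u ⬝ᵥ v ⨯₃ B`, the flow preserves this form. It therefore suffices to find a surface
`σ(q₁, q₂)` through the base point on which the flux form is `dq₁ ∧ dq₂`; then
`χ q = φ(q₃, σ(q₁, q₂))` works, and the two conditions force `Dχ(0)` to be invertible. To get `σ`,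
choose `e₁`, `e₂` with `g = e₁ ⬝ᵥ e₂ ⨯₃ B` nonzero at the base point and move the line in direction
`e₂` along the flow of `g⁻¹ • e₁`.
-/

open Set Filter Topology Metric
open scoped ContDiff

section InverseFunction

variable {𝕜 : Type*} [RCLike 𝕜] {E F : Type*} [NormedAddCommGroup E] [NormedSpace 𝕜 E]
  [NormedAddCommGroup F] [NormedSpace 𝕜 F]

theorem exists_openPartialHomeomorph_contDiffOn_symm [CompleteSpace E] {n : WithTop ℕ∞}
    (hn : n ≠ 0) {f : E → F} {W : Set E} (hW : IsOpen W) (hf : ContDiffOn 𝕜 n f W) {a : E}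
    (ha : a ∈ W) {f' : E ≃L[𝕜] F} (hf' : HasFDerivAt f (f' : E →L[𝕜] F) a) :
    ∃ P : OpenPartialHomeomorph E F,
      ⇑P = f ∧ a ∈ P.source ∧ P.source ⊆ W ∧ ContDiffOn 𝕜 n P.symm P.target := by
  have hfW : ∀ x ∈ W, ContDiffAt 𝕜 n f x := fun x hx => hf.contDiffAt (hW.mem_nhds hx)
  -- `ContDiffAt 𝕜 ∞ f a` carries no common neighbourhood for all orders, so the source is shrunk
  -- to points of `W` where the derivative is still invertible.
  let S : Set E := W ∩ fderiv 𝕜 f ⁻¹' range ((↑) : (E ≃L[𝕜] F) → E →L[𝕜] F)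
  have hS : IsOpen S :=
    (hf.continuousOn_fderiv_of_isOpen hW (ENat.one_le_iff_ne_zero_withTop.2 hn))
      |>.isOpen_inter_preimage hW ContinuousLinearEquiv.isOpen
  let P := ((hfW a ha).toOpenPartialHomeomorph f hf' hn).restrOpen S hS
  refine ⟨P, rfl, ⟨(hfW a ha).mem_toOpenPartialHomeomorph_source hf' hn, ha, f', hf'.fderiv.symm⟩,
    fun x hx => hx.2.1, fun y hy => ContDiffAt.contDiffWithinAt ?_⟩
  obtain ⟨-, hxW, e, he⟩ : P.symm y ∈ P.source := P.map_target hy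
  have hfe : HasFDerivAt f (e : E →L[𝕜] F) (P.symm y) :=
    he ▸ ((hfW _ hxW).differentiableAt hn).hasFDerivAt
  exact P.contDiffAt_symm hy hfe (hfW _ hxW)

theorem fderiv_openPartialHomeomorph_symm_apply (P : OpenPartialHomeomorph E F) {x : E}
    (hx : x ∈ P.source) {f' : E →L[𝕜] F} (hf' : HasFDerivAt P f' x)
    (hsymm : DifferentiableAt 𝕜 P.symm (P x)) (w : E) :
    fderiv 𝕜 P.symm (P x) (f' w) = w := by
  have hid : HasFDerivAt (P.symm ∘ P) (.id 𝕜 E) x :=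
    (hasFDerivAt_id x).congr_of_eventuallyEq (P.eventually_left_inverse hx)
  exact DFunLike.congr_fun ((hsymm.hasFDerivAt.comp x hf').unique hid) w

end InverseFunction

section Nemytskii

variable {K : Type*} [TopologicalSpace K]

/-- The Nemytskii (superposition) operator `γ ↦ f ∘ γ` on continuous maps; its value is the junk
value `0` when `f ∘ γ` is not continuous, so that `f` need only be continuous on a subset. -/
def nemytskii {E F : Type*} [TopologicalSpace E] [TopologicalSpace F] [Zero F]
    (f : E → F) (γ : C(K, E)) : C(K, F) :=
  ContinuousMap.mkD (f ∘ γ) 0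

/-- The continuous maps on `K` with values in `s`, the natural domain of `nemytskii f` when `f` is
regular on `s`. -/
def mapsInto (K : Type*) [TopologicalSpace K] {E : Type*} [TopologicalSpace E] (s : Set E) :
    Set C(K, E) :=
  {γ | MapsTo γ univ s}

section Topology

variable {E F : Type*} [TopologicalSpace E] [TopologicalSpace F] [Zero F] {f : E → F} {s : Set E}

theorem nemytskii_apply (hf : ContinuousOn f s) {γ : C(K, E)} (hγ : γ ∈ mapsInto K s) (x : K) :
    nemytskii f γ x = f (γ x) :=
  ContinuousMap.mkD_apply_of_continuous
    (hf.comp_continuous γ.continuous fun x => hγ (mem_univ x))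

theorem isOpen_mapsInto [CompactSpace K] (hs : IsOpen s) : IsOpen (mapsInto K s) :=
  ContinuousMap.isOpen_setOfPred_mapsTo isCompact_univ hs

theorem continuousOn_nemytskii (hf : ContinuousOn f s) :
    ContinuousOn (nemytskii f) (mapsInto K s) := by
  let corestrict : mapsInto K s → C(K, s) := fun γ =>
    ⟨fun x => ⟨γ.1 x, γ.2 (mem_univ x)⟩, by fun_prop⟩
  have hcorestrict : Continuous corestrict :=
    (ContinuousMap.isInducing_postcomp ⟨Subtype.val, continuous_subtype_val⟩
      IsInducing.subtypeVal).continuous_iff.2 continuous_subtype_val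
  rw [continuousOn_iff_continuous_domRestrict]
  refine ((ContinuousMap.continuous_postcomp ⟨_, hf.domRestrict⟩).comp hcorestrict).congr
    fun γ => ContinuousMap.ext fun x => ?_
  exact (nemytskii_apply hf γ.2 x).symm

end Topology

/-- The pointwise application `(L, η) ↦ (x ↦ L x (η x))` of a family of operators to a map, as a
continuous bilinear map. -/
def pointwiseApply (K : Type*) [TopologicalSpace K] [CompactSpace K]
    (𝕜 E F : Type*) [NontriviallyNormedField 𝕜] [NormedAddCommGroup E] [NormedSpace 𝕜 E]
    [NormedAddCommGroup F] [NormedSpace 𝕜 F] :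
    C(K, E →L[𝕜] F) →L[𝕜] C(K, E) →L[𝕜] C(K, F) :=
  LinearMap.mkContinuous₂
    (LinearMap.mk₂ 𝕜
      (fun (L : C(K, E →L[𝕜] F)) (η : C(K, E)) =>
        (⟨fun x => L x (η x), L.continuous.clm_apply η.continuous⟩ : C(K, F)))
      (by intros; ext; simp) (by intros; ext; simp) (by intros; ext; simp) (by intros; ext; simp))
    1 fun L η => by
      rw [one_mul, ContinuousMap.norm_le _ (by positivity)]
      exact fun x => (L x).le_of_opNorm_le_of_le (L.norm_coe_le_norm x) (η.norm_coe_le_norm x)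

variable [CompactSpace K]

@[simp]
theorem pointwiseApply_apply {𝕜 E F : Type*} [NontriviallyNormedField 𝕜] [NormedAddCommGroup E]
    [NormedSpace 𝕜 E] [NormedAddCommGroup F] [NormedSpace 𝕜 F] (L : C(K, E →L[𝕜] F)) (η : C(K, E))
    (x : K) : pointwiseApply K 𝕜 E F L η x = L x (η x) :=
  rfl

section Real

variable {E F : Type*} [NormedAddCommGroup E] [NormedSpace ℝ E] [NormedAddCommGroup F]
  [NormedSpace ℝ F] {s : Set E}

theorem hasFDerivAt_nemytskii {f : E → F} {f' : E → E →L[ℝ] F} (hs : IsOpen s)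
    (hf : ∀ x ∈ s, HasFDerivAt f (f' x) x) (hf' : ContinuousOn f' s) {γ : C(K, E)}
    (hγ : γ ∈ mapsInto K s) :
    HasFDerivAt (nemytskii f) (pointwiseApply K ℝ E F (nemytskii f' γ)) γ := by
  have hfc : ContinuousOn f s := fun x hx => (hf x hx).continuousAt.continuousWithinAt
  rw [hasFDerivAt_iff_isLittleO_nhds_zero, Asymptotics.isLittleO_iff]
  intro ε hε
  obtain ⟨δ, hδ, hγδ⟩ : ∃ δ > 0, ∀ η ∈ ball γ δ,
      η ∈ mapsInto K s ∧ dist (nemytskii f' η) (nemytskii f' γ) < ε := by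
    have hmem := (isOpen_mapsInto hs).mem_nhds hγ
    exact eventually_nhds_iff_ball.1 ((eventually_mem_set.2 hmem).and
      (Metric.tendsto_nhds.1 ((continuousOn_nemytskii hf').continuousAt hmem).tendsto ε hε))
  -- Shifting `γ` by a constant map turns uniform closeness of maps into pointwise closeness.
  have hnear : ∀ x, ∀ z ∈ ball (γ x) δ, z ∈ s ∧ ‖f' z - f' (γ x)‖ ≤ ε := by
    intro x z hz
    obtain ⟨hη, hdist⟩ := hγδ (γ + ContinuousMap.const K (z - γ x)) (by
      rw [mem_ball, dist_eq_norm, add_sub_cancel_left]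
      refine lt_of_le_of_lt ?_ (mem_ball_iff_norm.1 hz)
      exact (ContinuousMap.norm_le _ (norm_nonneg _)).2 fun _ => le_rfl)
    have hηx : (γ + ContinuousMap.const K (z - γ x)) x = z := by simp
    refine ⟨hηx ▸ hη (mem_univ x), ?_⟩
    have := (ContinuousMap.dist_apply_le_dist x).trans_lt hdist
    rw [nemytskii_apply hf' hη, nemytskii_apply hf' hγ, hηx, dist_eq_norm] at this
    exact this.le
  filter_upwards [ball_mem_nhds (0 : C(K, E)) hδ] with h hh
  have hγh : γ + h ∈ mapsInto K s := (hγδ _ (by simpa using hh)).1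
  rw [ContinuousMap.norm_le _ (by positivity)]
  intro x
  have hhx : ‖h x‖ < δ := (h.norm_coe_le_norm x).trans_lt (by simpa using hh)
  have hmvt : ‖f (γ x + h x) - f (γ x) - f' (γ x) (h x)‖ ≤ ε * ‖h x‖ := by
    simpa using (convex_ball (γ x) δ).norm_image_sub_le_of_norm_hasFDerivWithin_le'
      (fun z hz => (hf z (hnear x z hz).1).hasFDerivWithinAt) (fun z hz => (hnear x z hz).2)
      (mem_ball_self hδ) (y := γ x + h x) (by simpa using hhx)
  calc ‖(nemytskii f (γ + h) - nemytskii f γ - pointwiseApply K ℝ E F (nemytskii f' γ) h) x‖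
      = ‖f (γ x + h x) - f (γ x) - f' (γ x) (h x)‖ := by
        simp [nemytskii_apply hfc hγh, nemytskii_apply hfc hγ, nemytskii_apply hf' hγ]
    _ ≤ ε * ‖h x‖ := hmvt
    _ ≤ ε * ‖h‖ := by gcongr; exact h.norm_coe_le_norm x

end Real

section ContDiff

universe u

-- A single universe, because the induction on the order replaces `F` by `E →L[ℝ] F`.
variable {E F : Type u} [NormedAddCommGroup E] [NormedSpace ℝ E] [NormedAddCommGroup F]
  [NormedSpace ℝ F] {s : Set E}

theorem contDiffOn_nemytskii_nat (hs : IsOpen s) (n : ℕ) {f : E → F} (hf : ContDiffOn ℝ n f s) :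
    ContDiffOn ℝ n (nemytskii f) (mapsInto K s) := by
  induction n generalizing F with
  | zero => exact contDiffOn_zero.2 (continuousOn_nemytskii hf.continuousOn)
  | succ n ih =>
    push_cast at hf ⊢
    obtain ⟨hdiff, -, hfderiv⟩ := (contDiffOn_succ_iff_fderiv_of_isOpen hs).1 hf
    have hderiv : ∀ γ ∈ mapsInto K s, HasFDerivAt (nemytskii f)
        (pointwiseApply K ℝ E F (nemytskii (fderiv ℝ f) γ)) γ := fun γ hγ =>
      hasFDerivAt_nemytskii hs
        (fun x hx => (hdiff.differentiableAt (hs.mem_nhds hx)).hasFDerivAt)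
        hfderiv.continuousOn hγ
    refine (contDiffOn_succ_iff_fderiv_of_isOpen (isOpen_mapsInto hs)).2
      ⟨fun γ hγ => (hderiv γ hγ).differentiableAt.differentiableWithinAt, by simp, ?_⟩
    refine ContDiffOn.congr (f := fun γ => pointwiseApply K ℝ E F (nemytskii (fderiv ℝ f) γ)) ?_
      fun γ hγ => (hderiv γ hγ).fderiv
    exact (pointwiseApply K ℝ E F).contDiff.comp_contDiffOn (ih hfderiv)

theorem contDiffOn_nemytskii (hs : IsOpen s) {n : ℕ∞} {f : E → F} (hf : ContDiffOn ℝ n f s) :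
    ContDiffOn ℝ n (nemytskii f) (mapsInto K s) :=
  contDiffOn_iff_forall_nat_le.2 fun m hm =>
    contDiffOn_nemytskii_nat hs m (contDiffOn_iff_forall_nat_le.1 hf m hm)

end ContDiff

end Nemytskii

section Primitive

variable {E : Type*} [NormedAddCommGroup E] [NormedSpace ℝ E]

/-- The extension of a path on `[0, 1]` to `ℝ` that is constant on both sides, used to integrate and
differentiate paths. -/
abbrev extendPath (γ : C(unitInterval, E)) : C(ℝ, E) :=
  γ.comp ⟨projIcc 0 1 zero_le_one, continuous_projIcc⟩

/-- The primitive `γ ↦ (s ↦ ∫₀ˢ γ)` as a continuous linear operator on paths. -/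
def primitiveL (E : Type*) [NormedAddCommGroup E] [NormedSpace ℝ E] :
    C(unitInterval, E) →L[ℝ] C(unitInterval, E) :=
  LinearMap.mkContinuous
    { toFun := fun γ => ⟨fun s => ∫ τ in (0 : ℝ)..s, extendPath γ τ,
        (intervalIntegral.continuous_primitive
          (fun a b => (extendPath γ).continuous.intervalIntegrable a b) 0).comp
            continuous_subtype_val⟩
      map_add' := fun γ η => by
        ext s
        exact intervalIntegral.integral_add ((extendPath γ).continuous.intervalIntegrable _ _)
          ((extendPath η).continuous.intervalIntegrable _ _)
      map_smul' := fun c γ => by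
        ext s
        simp }
    1 fun γ => by
      rw [ContinuousMap.norm_le _ (by positivity), one_mul]
      intro s
      calc ‖∫ τ in (0 : ℝ)..s, extendPath γ τ‖ ≤ ‖γ‖ * |(s : ℝ) - 0| :=
            intervalIntegral.norm_integral_le_of_norm_le_const fun τ _ => γ.norm_coe_le_norm _
        _ ≤ ‖γ‖ := by
            rw [sub_zero, abs_of_nonneg s.2.1]
            exact mul_le_of_le_one_right (norm_nonneg _) s.2.2

theorem primitiveL_apply (γ : C(unitInterval, E)) (s : unitInterval) :
    primitiveL E γ s = ∫ τ in (0 : ℝ)..s, extendPath γ τ :=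
  rfl

variable [CompleteSpace E]

theorem hasDerivAt_extendPath_primitiveL (γ : C(unitInterval, E)) {s : ℝ} (hs : s ∈ Ioo 0 1) :
    HasDerivAt (extendPath (primitiveL E γ)) (extendPath γ s) s := by
  refine ((extendPath γ).continuous.integral_hasStrictDerivAt 0 s).hasDerivAt.congr_of_eventuallyEq
    ?_
  filter_upwards [isOpen_Ioo.mem_nhds hs] with τ hτ
  simp [primitiveL_apply, projIcc_of_mem zero_le_one (Ioo_subset_Icc_self hτ)]

theorem eq_primitiveL_of_hasDerivAt {γ η : C(unitInterval, E)} (hγ : γ 0 = 0)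
    (hderiv : ∀ s ∈ Ioo (0 : ℝ) 1, HasDerivAt (extendPath γ) (extendPath η s) s) :
    γ = primitiveL E η := by
  ext s
  have hftc := intervalIntegral.integral_eq_sub_of_hasDerivAt_of_le s.2.1
    (extendPath γ).continuous.continuousOn
    (fun τ hτ => hderiv τ ⟨hτ.1, hτ.2.trans_le s.2.2⟩)
    ((extendPath η).continuous.intervalIntegrable 0 s)
  simpa [primitiveL_apply, hγ] using hftc.symm

end Primitive

section PathMap

variable {E : Type*} [NormedAddCommGroup E] [NormedSpace ℝ E] {v : E → E} {Ω : Set E} {n : ℕ∞}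

/-- The map whose equation `pathMap v z = ((t, x), 0)` says that `z = ((t, x), γ)` with
`γ s = x + t ∫₀ˢ v(γ)`, i.e. that `γ` is the integral curve of `v` from `x` up to time `t`,
reparametrized by `[0, 1]`. -/
def pathMap (v : E → E) (z : (ℝ × E) × C(unitInterval, E)) : (ℝ × E) × C(unitInterval, E) :=
  (z.1, z.2 - (ContinuousLinearMap.const ℝ unitInterval z.1.2
    + z.1.1 • primitiveL E (nemytskii v z.2)))

/-- The derivative of `pathMap v` at `z`. -/
def pathMapDeriv (v : E → E) (z : (ℝ × E) × C(unitInterval, E)) :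
    (ℝ × E) × C(unitInterval, E) →L[ℝ] (ℝ × E) × C(unitInterval, E) :=
  (ContinuousLinearMap.fst ℝ _ _).prod (ContinuousLinearMap.snd ℝ _ _ -
    ((ContinuousLinearMap.const ℝ unitInterval ∘L ContinuousLinearMap.snd ℝ ℝ E ∘L
        ContinuousLinearMap.fst ℝ (ℝ × E) C(unitInterval, E)) +
      (z.1.1 • primitiveL E ∘L pointwiseApply unitInterval ℝ E E (nemytskii (fderiv ℝ v) z.2) ∘L
          ContinuousLinearMap.snd ℝ (ℝ × E) C(unitInterval, E) +
        (ContinuousLinearMap.fst ℝ ℝ E ∘L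
            ContinuousLinearMap.fst ℝ (ℝ × E) C(unitInterval, E)).smulRight
          (primitiveL E (nemytskii v z.2)))))

theorem contDiffOn_pathMap (hΩ : IsOpen Ω) (hv : ContDiffOn ℝ n v Ω) :
    ContDiffOn ℝ n (pathMap v) (Prod.snd ⁻¹' mapsInto unitInterval Ω) := by
  have hnem : ContDiffOn ℝ n (fun z : (ℝ × E) × C(unitInterval, E) =>
      primitiveL E (nemytskii v z.2)) (Prod.snd ⁻¹' mapsInto unitInterval Ω) :=
    (primitiveL E).contDiff.comp_contDiffOn
      ((contDiffOn_nemytskii hΩ hv).comp contDiffOn_snd fun _ hz => hz)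
  have hconst : ContDiff ℝ n (fun z : (ℝ × E) × C(unitInterval, E) =>
      ContinuousLinearMap.const ℝ unitInterval z.1.2) := by
    fun_prop
  exact contDiffOn_fst.prodMk (contDiffOn_snd.sub (hconst.contDiffOn.add
    ((contDiff_fst.comp contDiff_fst).contDiffOn.smul hnem)))

theorem hasFDerivAt_pathMap (hΩ : IsOpen Ω) (hv : ContDiffOn ℝ 1 v Ω)
    {z : (ℝ × E) × C(unitInterval, E)} (hz : z.2 ∈ mapsInto unitInterval Ω) :
    HasFDerivAt (pathMap v) (pathMapDeriv v z) z := by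
  have hnem : HasFDerivAt (nemytskii v)
      (pointwiseApply unitInterval ℝ E E (nemytskii (fderiv ℝ v) z.2)) z.2 :=
    hasFDerivAt_nemytskii hΩ
      (fun x hx => ((hv.differentiableOn one_ne_zero).differentiableAt
        (hΩ.mem_nhds hx)).hasFDerivAt)
      (hv.continuousOn_fderiv_of_isOpen hΩ le_rfl) hz
  have hp : HasFDerivAt Prod.fst (ContinuousLinearMap.fst ℝ (ℝ × E) C(unitInterval, E)) z :=
    hasFDerivAt_fst
  exact hp.prodMk (hasFDerivAt_snd.sub
    (((ContinuousLinearMap.const ℝ unitInterval (M := E)).hasFDerivAt.comp z hp.snd).add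
      (hp.fst.smul ((primitiveL E).hasFDerivAt.comp z (hnem.comp z hasFDerivAt_snd)))))

theorem exists_equiv_eq_pathMapDeriv (v : E → E) (x : E) (γ : C(unitInterval, E)) :
    ∃ e : ((ℝ × E) × C(unitInterval, E)) ≃L[ℝ] (ℝ × E) × C(unitInterval, E),
      (e : _ →L[ℝ] _) = pathMapDeriv v ((0, x), γ) := by
  refine ⟨ContinuousLinearEquiv.skewProd (.refl ℝ _) (.refl ℝ _)
    (-(ContinuousLinearMap.const ℝ unitInterval ∘L ContinuousLinearMap.snd ℝ ℝ E +
      (ContinuousLinearMap.fst ℝ ℝ E).smulRight (primitiveL E (nemytskii v γ)))), ?_⟩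
  ext z <;> simp [pathMapDeriv, sub_eq_add_neg]

/-- The velocity with respect to `t` of the rescaled integral curve `s ↦ φ(ts, x)`. -/
def scaledVelocity (v : E → E) (γ : C(unitInterval, E)) : C(unitInterval, E) :=
  ⟨fun s => (s : ℝ) • nemytskii v γ s, by fun_prop⟩

variable [CompleteSpace E] {p : ℝ × E} {γ : C(unitInterval, E)}

theorem hasDerivAt_extendPath_of_pathMap_eq (hv : ContinuousOn v Ω)
    (hγ : γ ∈ mapsInto unitInterval Ω) (hsol : pathMap v (p, γ) = (p, 0)) {s : ℝ}
    (hs : s ∈ Ioo 0 1) :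
    HasDerivAt (extendPath γ) (p.1 • v (extendPath γ s)) s := by
  have hγ_eq : γ = ContinuousLinearMap.const ℝ unitInterval p.2 +
      p.1 • primitiveL E (nemytskii v γ) := by
    simpa [pathMap, sub_eq_zero] using congrArg Prod.snd hsol
  have hprim := ((hasDerivAt_extendPath_primitiveL (nemytskii v γ) hs).const_smul p.1).const_add p.2
  rw [show v (extendPath γ s) = extendPath (nemytskii v γ) s from (nemytskii_apply hv hγ _).symm]
  refine hprim.congr_of_eventuallyEq (Eventually.of_forall fun τ => ?_)
  conv_lhs => rw [hγ_eq]
  rfl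

theorem scaledVelocity_eq_primitiveL (hΩ : IsOpen Ω) (hv : ContDiffOn ℝ 1 v Ω)
    (hγ : γ ∈ mapsInto unitInterval Ω) (hsol : pathMap v (p, γ) = (p, 0)) :
    scaledVelocity v γ = primitiveL E (nemytskii v γ + p.1 •
      pointwiseApply unitInterval ℝ E E (nemytskii (fderiv ℝ v) γ) (scaledVelocity v γ)) := by
  refine eq_primitiveL_of_hasDerivAt (by simp [scaledVelocity]) fun s hs => ?_
  have hmem : extendPath γ s ∈ Ω := hγ (mem_univ _)
  have hproj : ((projIcc 0 1 zero_le_one s : unitInterval) : ℝ) = s := by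
    rw [projIcc_of_mem zero_le_one (Ioo_subset_Icc_self hs)]
  have hcurve : HasDerivAt (fun τ => v (extendPath γ τ))
      (fderiv ℝ v (extendPath γ s) (p.1 • v (extendPath γ s))) s :=
    ((hv.differentiableOn one_ne_zero).differentiableAt
      (hΩ.mem_nhds hmem)).hasFDerivAt.comp_hasDerivAt s
        (hasDerivAt_extendPath_of_pathMap_eq hv.continuousOn hγ hsol hs)
  refine (((hasDerivAt_id s).smul hcurve).congr_of_eventuallyEq ?_).congr_deriv ?_
  · filter_upwards [isOpen_Ioo.mem_nhds hs] with τ hτ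
    simp [scaledVelocity, nemytskii_apply hv.continuousOn hγ,
      projIcc_of_mem zero_le_one (Ioo_subset_Icc_self hτ)]
  · have hfderiv := nemytskii_apply (hv.continuousOn_fderiv_of_isOpen hΩ le_rfl) hγ
    simp only [ContinuousMap.comp_apply, ContinuousMap.coe_mk, ContinuousMap.add_apply,
      ContinuousMap.smul_apply, pointwiseApply_apply, scaledVelocity, hfderiv,
      nemytskii_apply hv.continuousOn hγ, hproj, id, map_smul, one_smul]
    rw [smul_comm, add_comm]

theorem pathMapDeriv_scaledVelocity (hΩ : IsOpen Ω) (hv : ContDiffOn ℝ 1 v Ω)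
    (hγ : γ ∈ mapsInto unitInterval Ω) (hsol : pathMap v (p, γ) = (p, 0)) :
    pathMapDeriv v (p, γ) ((1, 0), scaledVelocity v γ) = ((1, 0), 0) := by
  have heq := scaledVelocity_eq_primitiveL hΩ hv hγ hsol
  rw [map_add, map_smul] at heq
  refine Prod.ext rfl ?_
  simpa [pathMapDeriv, sub_eq_zero, add_comm] using heq

end PathMap

section LocalFlow

variable {E : Type*} [NormedAddCommGroup E] [NormedSpace ℝ E] {v : E → E} {Ω : Set E} {n : ℕ∞}
  {x₀ : E}

theorem exists_openPartialHomeomorph_eq_pathMap [CompleteSpace E] (hn : n ≠ 0) (hΩ : IsOpen Ω)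
    (hv : ContDiffOn ℝ n v Ω) (hx₀ : x₀ ∈ Ω) :
    ∃ P : OpenPartialHomeomorph ((ℝ × E) × C(unitInterval, E)) ((ℝ × E) × C(unitInterval, E)),
      ⇑P = pathMap v ∧ ((0, x₀), 0) ∈ P.target ∧
        P.source ⊆ Prod.snd ⁻¹' mapsInto unitInterval Ω ∧ ContDiffOn ℝ n P.symm P.target := by
  have hn' : (n : WithTop ℕ∞) ≠ 0 := mod_cast hn
  let γ₀ : C(unitInterval, E) := ContinuousLinearMap.const ℝ unitInterval x₀
  have hγ₀ : γ₀ ∈ mapsInto unitInterval Ω := fun _ _ => hx₀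
  obtain ⟨e, he⟩ := exists_equiv_eq_pathMapDeriv v x₀ γ₀
  have hderiv : HasFDerivAt (pathMap v) (e : _ →L[ℝ] _) ((0, x₀), γ₀) :=
    he ▸ hasFDerivAt_pathMap hΩ (hv.of_le (ENat.one_le_iff_ne_zero_withTop.2 hn')) hγ₀
  obtain ⟨P, hP, haP, hPW, hPsymm⟩ := exists_openPartialHomeomorph_contDiffOn_symm
    hn' ((isOpen_mapsInto hΩ).preimage continuous_snd) (contDiffOn_pathMap hΩ hv) hγ₀ hderiv
  have hval : P ((0, x₀), γ₀) = ((0, x₀), 0) := by simp [hP, pathMap, γ₀]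
  exact ⟨P, hP, hval ▸ P.map_source haP, hPW, hPsymm⟩

theorem exists_contDiffOn_path [CompleteSpace E] (hn : n ≠ 0) (hΩ : IsOpen Ω)
    (hv : ContDiffOn ℝ n v Ω) (hx₀ : x₀ ∈ Ω) :
    ∃ U : Set (ℝ × E), IsOpen U ∧ (0, x₀) ∈ U ∧ ∃ S : ℝ × E → C(unitInterval, E),
      ContDiffOn ℝ n S U ∧ ∀ p ∈ U, S p ∈ mapsInto unitInterval Ω ∧
        pathMap v (p, S p) = (p, 0) ∧ fderiv ℝ S p (1, 0) = scaledVelocity v (S p) := by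
  have hn' : (n : WithTop ℕ∞) ≠ 0 := mod_cast hn
  have hv1 : ContDiffOn ℝ 1 v Ω := hv.of_le (ENat.one_le_iff_ne_zero_withTop.2 hn')
  obtain ⟨P, hP, hx₀P, hPΩ, hPsymm⟩ := exists_openPartialHomeomorph_eq_pathMap hn hΩ hv hx₀
  let U : Set (ℝ × E) := (·, 0) ⁻¹' P.target
  let S : ℝ × E → C(unitInterval, E) := fun p => (P.symm (p, 0)).2
  have hι : ContDiff ℝ n (fun p : ℝ × E => (p, (0 : C(unitInterval, E)))) := by fun_prop
  have hPι : ContDiffOn ℝ n (fun p : ℝ × E => P.symm (p, 0)) U :=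
    hPsymm.comp hι.contDiffOn fun _ hp => hp
  refine ⟨U, P.open_target.preimage hι.continuous, hx₀P, S, contDiff_snd.comp_contDiffOn hPι,
    fun p hp => ?_⟩
  have hS : P.symm (p, 0) = (p, S p) := by
    have hright : pathMap v (P.symm (p, 0)) = (p, 0) := hP ▸ P.right_inv hp
    have hfst : (P.symm (p, 0)).1 = p := congrArg Prod.fst hright
    exact Prod.ext hfst rfl
  have hsource : (p, S p) ∈ P.source := hS ▸ P.map_target hp
  have hmem : (p, S p) ∈ Prod.snd ⁻¹' mapsInto unitInterval Ω := hPΩ hsource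
  have hsol : P (p, S p) = (p, 0) := hS ▸ P.right_inv hp
  refine ⟨hmem, hP ▸ hsol, ?_⟩
  have hdiff : DifferentiableAt ℝ P.symm (p, 0) :=
    (hPsymm.contDiffAt (P.open_target.mem_nhds hp)).differentiableAt hn'
  have hsymm : fderiv ℝ P.symm (p, 0) ((1, 0), 0) = ((1, 0), scaledVelocity v (S p)) := by
    rw [← pathMapDeriv_scaledVelocity hΩ hv1 hmem (hP ▸ hsol), ← hsol]
    exact fderiv_openPartialHomeomorph_symm_apply P hsource
      (hP ▸ hasFDerivAt_pathMap hΩ hv1 hmem) (hsol ▸ hdiff) _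
  have hderiv : HasFDerivAt S (ContinuousLinearMap.snd ℝ (ℝ × E) C(unitInterval, E) ∘L
      fderiv ℝ P.symm (p, 0) ∘L ContinuousLinearMap.inl ℝ (ℝ × E) C(unitInterval, E)) p :=
    hasFDerivAt_snd.comp p
      (hdiff.hasFDerivAt.comp p (ContinuousLinearMap.inl ℝ (ℝ × E) C(unitInterval, E)).hasFDerivAt)
  rw [hderiv.fderiv]
  exact congrArg Prod.snd hsymm

theorem eq_apply_zero_of_hasDerivAt_zero {f : ℝ → E} {δ t : ℝ}
    (hf : ∀ s ∈ ball (0 : ℝ) δ, HasDerivAt f 0 s) (ht : t ∈ ball 0 δ) : f t = f 0 :=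
  isOpen_ball.is_const_of_deriv_eq_zero (convex_ball 0 δ).isPreconnected
    (fun s hs => (hf s hs).differentiableAt.differentiableWithinAt)
    (fun s hs => (hf s hs).deriv) ht (mem_ball_self (pos_of_mem_ball ht))

theorem hasDerivAt_prodMk_const (x : E) (t : ℝ) :
    HasDerivAt (fun s : ℝ => (s, x)) (1, 0) t :=
  (hasDerivAt_id t).prodMk (hasDerivAt_const t x)

/-- `φ` is a flow of `v` on the ball of radius `δ` around `(0, x₀)`, with values in `Ω`. -/
structure IsLocalFlow (v : E → E) (Ω : Set E) (φ : ℝ × E → E) (x₀ : E) (δ : ℝ) : Prop where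
  mapsTo : MapsTo φ (ball (0, x₀) δ) Ω
  apply_zero : ∀ x ∈ ball x₀ δ, φ (0, x) = x
  hasDerivAt : ∀ p ∈ ball (0, x₀) δ, HasDerivAt (fun t => φ (t, p.2)) (v (φ p)) p.1

theorem exists_isLocalFlow [CompleteSpace E] (hn : n ≠ 0) (hΩ : IsOpen Ω)
    (hv : ContDiffOn ℝ n v Ω) (hx₀ : x₀ ∈ Ω) :
    ∃ δ > 0, ∃ φ : ℝ × E → E, ContDiffOn ℝ n φ (ball (0, x₀) δ) ∧ IsLocalFlow v Ω φ x₀ δ := by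
  obtain ⟨U, hU, hx₀U, S, hS, hSU⟩ := exists_contDiffOn_path hn hΩ hv hx₀
  obtain ⟨δ, hδ, hδU⟩ := Metric.isOpen_iff.1 hU _ hx₀U
  let ev := ContinuousMap.evalCLM (M := E) ℝ (1 : unitInterval)
  refine ⟨δ, hδ, fun p => S p 1, ev.contDiff.comp_contDiffOn (hS.mono hδU),
    fun p hp => (hSU p (hδU hp)).1 (mem_univ _), fun x hx => ?_, fun p hp => ?_⟩
  · obtain ⟨-, hsol, -⟩ := hSU (0, x) (hδU (by simpa [Prod.dist_eq, hδ] using hx))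
    have hconst : S (0, x) = ContinuousLinearMap.const ℝ unitInterval x := by
      simpa [pathMap, sub_eq_zero] using congrArg Prod.snd hsol
    simp [hconst]
  · obtain ⟨hmem, -, hderiv⟩ := hSU p (hδU hp)
    have hSp : HasFDerivAt S (fderiv ℝ S p) p :=
      ((hS.contDiffAt (hU.mem_nhds (hδU hp))).differentiableAt (mod_cast hn)).hasFDerivAt
    refine (ev.hasFDerivAt.comp_hasDerivAt p.1
      (hSp.comp_hasDerivAt p.1 (hasDerivAt_prodMk_const p.2 p.1))).congr_deriv ?_
    simp [hderiv, ev, scaledVelocity, nemytskii_apply hv.continuousOn hmem]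

namespace IsLocalFlow

variable {φ : ℝ × E → E} {δ : ℝ} {p : ℝ × E}

theorem fderiv_apply_one_zero (h : IsLocalFlow v Ω φ x₀ δ) (hφ : DifferentiableAt ℝ φ p)
    (hp : p ∈ ball (0, x₀) δ) : fderiv ℝ φ p (1, 0) = v (φ p) :=
  (hφ.hasFDerivAt.comp_hasDerivAt p.1 (hasDerivAt_prodMk_const p.2 p.1)).unique
    (h.hasDerivAt p hp)

theorem fderiv_apply (h : IsLocalFlow v Ω φ x₀ δ) (hφ : DifferentiableAt ℝ φ p)
    (hp : p ∈ ball (0, x₀) δ) (w : ℝ × E) :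
    fderiv ℝ φ p w = w.1 • v (φ p) + fderiv ℝ φ p (0, w.2) := by
  rw [← h.fderiv_apply_one_zero hφ hp, ← map_smul, ← map_add]
  simp

theorem fderiv_zero_apply_zero_left (h : IsLocalFlow v Ω φ x₀ δ) {x : E} (hx : x ∈ ball x₀ δ)
    (hφ : DifferentiableAt ℝ φ (0, x)) (u : E) : fderiv ℝ φ (0, x) (0, u) = u := by
  have hslice : HasFDerivAt (fun y => φ (0, y)) (.id ℝ E) x :=
    (hasFDerivAt_id x).congr_of_eventuallyEq <| by
      filter_upwards [isOpen_ball.mem_nhds hx] with y hy using h.apply_zero y hy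
  exact DFunLike.congr_fun ((hφ.hasFDerivAt.comp x (hasFDerivAt_prodMk_right 0 x)).unique hslice) u

theorem clm_apply_eq {F : Type*} [NormedAddCommGroup F] [NormedSpace ℝ F]
    (h : IsLocalFlow v Ω φ x₀ δ) {L : E →L[ℝ] F} (hL : ∀ x ∈ Ω, L (v x) = 0)
    (hp : p ∈ ball (0, x₀) δ) : L (φ p) = L p.2 := by
  obtain ⟨t, x⟩ := p
  obtain ⟨ht, hx⟩ : t ∈ ball 0 δ ∧ x ∈ ball x₀ δ := by rwa [← ball_prod_same, mem_prod] at hp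
  rw [eq_apply_zero_of_hasDerivAt_zero (f := fun s => L (φ (s, x))) _ ht, h.apply_zero x hx]
  intro s hs
  have hsx : (s, x) ∈ ball (0, x₀) δ := ball_prod_same (0 : ℝ) x₀ δ ▸ ⟨hs, hx⟩
  exact (L.hasFDerivAt.comp_hasDerivAt s (h.hasDerivAt _ hsx)).congr_deriv
    (hL _ (h.mapsTo hsx))

theorem clm_fderiv_apply (h : IsLocalFlow v Ω φ x₀ δ) {F : Type*} [NormedAddCommGroup F]
    [NormedSpace ℝ F] {L : E →L[ℝ] F} (hL : ∀ x ∈ Ω, L (v x) = 0) (hφ : DifferentiableAt ℝ φ p)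
    (hp : p ∈ ball (0, x₀) δ) (w : ℝ × E) : L (fderiv ℝ φ p w) = L w.2 := by
  have hLφ : HasFDerivAt (fun p => L (φ p)) (L ∘L ContinuousLinearMap.snd ℝ ℝ E) p :=
    (L.hasFDerivAt.comp p hasFDerivAt_snd).congr_of_eventuallyEq <| by
      filter_upwards [isOpen_ball.mem_nhds hp] with q hq using h.clm_apply_eq hL hq
  exact DFunLike.congr_fun ((L.hasFDerivAt.comp p hφ.hasFDerivAt).unique hLφ) w

theorem hasDerivAt_fderiv (h : IsLocalFlow v Ω φ x₀ δ) (hp : p ∈ ball (0, x₀) δ)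
    (hφ : ContDiffAt ℝ 2 φ p) (hv : DifferentiableAt ℝ v (φ p)) (u : E) :
    HasDerivAt (fun t => fderiv ℝ φ (t, p.2) (0, u))
      (fderiv ℝ v (φ p) (fderiv ℝ φ p (0, u))) p.1 := by
  have hdφ : HasFDerivAt (fderiv ℝ φ) (fderiv ℝ (fderiv ℝ φ) p) p :=
    ((hφ.fderiv_right (m := 1) (by norm_num)).differentiableAt one_ne_zero).hasFDerivAt
  have hfield : fderiv ℝ (fderiv ℝ φ) p (0, u) (1, 0) =
      fderiv ℝ v (φ p) (fderiv ℝ φ p (0, u)) := by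
    have hflow : (fun q => fderiv ℝ φ q (1, 0)) =ᶠ[𝓝 p] v ∘ φ := by
      filter_upwards [isOpen_ball.mem_nhds hp, hφ.eventually (by simp)] with q hq hφq
      exact h.fderiv_apply_one_zero (hφq.differentiableAt two_ne_zero) hq
    have hleft : HasFDerivAt (fun q => fderiv ℝ φ q (1, 0))
        ((fderiv ℝ (fderiv ℝ φ) p).flip (1, 0)) p :=
      (ContinuousLinearMap.apply ℝ E ((1, 0) : ℝ × E)).hasFDerivAt.comp p hdφ
    have hright : HasFDerivAt (v ∘ φ) (fderiv ℝ v (φ p) ∘L fderiv ℝ φ p) p :=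
      hv.hasFDerivAt.comp p (hφ.differentiableAt two_ne_zero).hasFDerivAt
    exact DFunLike.congr_fun (hleft.unique (hright.congr_of_eventuallyEq hflow)) (0, u)
  have hcurve : HasDerivAt (fun t => fderiv ℝ φ (t, p.2)) (fderiv ℝ (fderiv ℝ φ) p (1, 0)) p.1 :=
    hdφ.comp_hasDerivAt p.1 (hasDerivAt_prodMk_const p.2 p.1)
  rw [← hfield, (hφ.isSymmSndFDerivAt (by simp)).eq]
  exact (ContinuousLinearMap.apply ℝ E ((0, u) : ℝ × E)).hasFDerivAt.comp_hasDerivAt p.1 hcurve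

end IsLocalFlow

end LocalFlow

section VectorCalculus

/-- The divergence `∑ i, ∂ᵢFᵢ` of a vector field in Cartesian coordinates. -/
def divergence {ι : Type*} [Fintype ι] [DecidableEq ι] (F : (ι → ℝ) → ι → ℝ) (x : ι → ℝ) : ℝ :=
  ∑ i, fderiv ℝ F x (Pi.single i 1) i

theorem contDiff_curl {m n : WithTop ℕ∞} {A : (Fin 3 → ℝ) → Fin 3 → ℝ} (hA : ContDiff ℝ n A)
    (hmn : m + 1 ≤ n) : ContDiff ℝ m (curl A) := by
  have hpartial : ∀ i (w : Fin 3 → ℝ), ContDiff ℝ m fun x => fderiv ℝ (fun y => A y i) x w :=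
    fun i w => ((contDiff_pi.1 hA i).fderiv_right hmn).clm_apply contDiff_const
  refine contDiff_pi.2 fun i => ?_
  fin_cases i <;> exact (hpartial _ _).sub (hpartial _ _)

theorem fderiv_fderiv_apply_comm {E F : Type*} [NormedAddCommGroup E] [NormedSpace ℝ E]
    [NormedAddCommGroup F] [NormedSpace ℝ F] {f : E → F} {x : E} (hf : ContDiffAt ℝ 2 f x)
    (u v : E) :
    fderiv ℝ (fun y => fderiv ℝ f y u) x v = fderiv ℝ (fun y => fderiv ℝ f y v) x u := by
  have hdf : DifferentiableAt ℝ (fderiv ℝ f) x :=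
    (hf.fderiv_right (m := 1) (by norm_num)).differentiableAt one_ne_zero
  simp [fderiv_clm_apply hdf (differentiableAt_const _), (hf.isSymmSndFDerivAt (by simp)).eq u v]

theorem divergence_curl {A : (Fin 3 → ℝ) → Fin 3 → ℝ} (hA : ContDiff ℝ 2 A) (x : Fin 3 → ℝ) :
    divergence (curl A) x = 0 := by
  have hA' : ∀ i, ContDiff ℝ 2 fun y => A y i := contDiff_pi.1 hA
  have hpartial : ∀ i (w : Fin 3 → ℝ),
      DifferentiableAt ℝ (fun y => fderiv ℝ (fun z => A z i) y w) x := fun i w =>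
    (((hA' i).fderiv_right (m := 1) (by norm_num)).clm_apply contDiff_const).differentiable
      one_ne_zero x
  have hcurl : DifferentiableAt ℝ (curl A) x :=
    (contDiff_curl (m := 1) hA (by norm_num)).differentiable one_ne_zero x
  have hcoord : ∀ i (w : Fin 3 → ℝ), fderiv ℝ (curl A) x w i = fderiv ℝ (fun y => curl A y i) x w :=
    fun i w => by rw [fderiv_apply hcurl]; rfl
  simp only [divergence, Fin.sum_univ_three, hcoord, curl, cons_val]
  simp only [fderiv_fun_sub (hpartial _ _) (hpartial _ _), _root_.sub_apply,
    fderiv_fderiv_apply_comm (hA' 2).contDiffAt (Pi.single 1 1) (Pi.single 0 1),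
    fderiv_fderiv_apply_comm (hA' 1).contDiffAt (Pi.single 2 1) (Pi.single 0 1),
    fderiv_fderiv_apply_comm (hA' 0).contDiffAt (Pi.single 2 1) (Pi.single 1 1)]
  ring

theorem norm3_ne_zero {v : Fin 3 → ℝ} (hv : v ≠ 0) : norm3 v ≠ 0 :=
  Real.sqrt_ne_zero'.2 (dotProduct_self_star_pos_iff.2 hv)

theorem contDiffOn_norm3 {E : Type*} [NormedAddCommGroup E] [NormedSpace ℝ E] {n : WithTop ℕ∞}
    {f : E → Fin 3 → ℝ} {s : Set E} (hf : ContDiffOn ℝ n f s) (hf₀ : ∀ x ∈ s, f x ≠ 0) :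
    ContDiffOn ℝ n (fun x => norm3 (f x)) s := by
  have hdot : ContDiffOn ℝ n (fun x => f x ⬝ᵥ f x) s :=
    ContDiffOn.sum fun i _ => (contDiffOn_pi.1 hf i).mul (contDiffOn_pi.1 hf i)
  exact hdot.sqrt fun x hx => dotProduct_self_eq_zero.not.2 (hf₀ x hx)

variable {u v w : ℝ → Fin 3 → ℝ}

theorem hasDerivAt_triple_product {u' v' w' : Fin 3 → ℝ} {t : ℝ} (hu : HasDerivAt u u' t)
    (hv : HasDerivAt v v' t) (hw : HasDerivAt w w' t) :
    HasDerivAt (fun s => u s ⬝ᵥ v s ⨯₃ w s)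
      (u' ⬝ᵥ v t ⨯₃ w t + u t ⬝ᵥ v' ⨯₃ w t + u t ⬝ᵥ v t ⨯₃ w') t := by
  have hu := hasDerivAt_pi.1 hu
  have hv := hasDerivAt_pi.1 hv
  have hw := hasDerivAt_pi.1 hw
  simp only [cross_apply, vec3_dotProduct, cons_val]
  refine ((((hu 0).mul (((hv 1).mul (hw 2)).sub ((hv 2).mul (hw 1)))).add
    ((hu 1).mul (((hv 2).mul (hw 0)).sub ((hv 0).mul (hw 2))))).add
    ((hu 2).mul (((hv 0).mul (hw 1)).sub ((hv 1).mul (hw 0))))).congr_deriv ?_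
  simp only [Pi.mul_apply, Pi.sub_apply]
  ring

end VectorCalculus

section TripleProduct

variable {R : Type*} [CommRing R]

theorem triple_product_trace (L : (Fin 3 → R) →ₗ[R] Fin 3 → R) (u v w : Fin 3 → R) :
    L u ⬝ᵥ v ⨯₃ w + u ⬝ᵥ L v ⨯₃ w + u ⬝ᵥ v ⨯₃ L w =
      (∑ i, L (Pi.single i 1) i) * (u ⬝ᵥ v ⨯₃ w) := by
  have hL : ∀ z i, L z i = ∑ j, z j * L (Pi.single j 1) i := fun z i => by
    conv_lhs => rw [pi_eq_sum_univ' z]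
    simp
  simp only [cross_apply, vec3_dotProduct, cons_val, hL u, hL v, hL w, Fin.sum_univ_three]
  ring

theorem triple_product_smul_add_smul (a b c d : R) (u v w : Fin 3 → R) :
    (a • u + b • v) ⬝ᵥ (c • u + d • v) ⨯₃ w = (a * d - b * c) * (u ⬝ᵥ v ⨯₃ w) := by
  simp only [cross_apply, vec3_dotProduct, cons_val, Pi.add_apply, Pi.smul_apply, smul_eq_mul]
  ring

theorem triple_product_smul_add_right (a b : R) (u v w : Fin 3 → R) :
    (a • w + u) ⬝ᵥ (b • w + v) ⨯₃ w = u ⬝ᵥ v ⨯₃ w := by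
  simp only [cross_apply, vec3_dotProduct, cons_val, Pi.add_apply, Pi.smul_apply, smul_eq_mul]
  ring

theorem exists_triple_product_ne_zero {b : Fin 3 → R} (hb : b ≠ 0) :
    ∃ e₁ e₂ : Fin 3 → R, e₁ ⬝ᵥ e₂ ⨯₃ b ≠ 0 := by
  by_contra! h
  refine hb (funext fun i => ?_)
  fin_cases i
  · simpa [cross_apply] using h (Pi.single 1 1) (Pi.single 2 1)
  · simpa [cross_apply] using h (Pi.single 2 1) (Pi.single 0 1)
  · simpa [cross_apply] using h (Pi.single 0 1) (Pi.single 1 1)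

theorem injective_of_triple_product_eq [IsDomain R] {L : (Fin 3 → R) →ₗ[R] Fin 3 → R}
    {w : Fin 3 → R} (hL : ∀ u v, L u ⬝ᵥ L v ⨯₃ w = u 0 * v 1 - u 1 * v 0)
    (hL2 : L (Pi.single 2 1) ≠ 0) : Function.Injective L := by
  refine (injective_iff_map_eq_zero L).2 fun u hu => ?_
  have hu0 : u 0 = 0 := by simpa [hu] using (hL u (Pi.single 1 1)).symm
  have hu1 : u 1 = 0 := by simpa [hu] using (hL u (Pi.single 0 1)).symm
  have hu_eq : u = u 2 • Pi.single 2 1 := by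
    ext i
    fin_cases i <;> simp [hu0, hu1]
  rw [hu_eq, map_smul, smul_eq_zero_iff_left hL2] at hu
  rw [hu_eq, hu, zero_smul]

end TripleProduct

section Flux

variable {B : (Fin 3 → ℝ) → Fin 3 → ℝ} {l : (Fin 3 → ℝ) → ℝ} {Ω : Set (Fin 3 → ℝ)}
  {φ : ℝ × (Fin 3 → ℝ) → Fin 3 → ℝ} {x₀ : Fin 3 → ℝ} {δ : ℝ} {p : ℝ × (Fin 3 → ℝ)}

theorem IsLocalFlow.hasDerivAt_flux (h : IsLocalFlow (fun x => l x • B x) Ω φ x₀ δ)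
    (hp : p ∈ ball (0, x₀) δ) (hφ : ContDiffAt ℝ 2 φ p) (hl : DifferentiableAt ℝ l (φ p))
    (hB : DifferentiableAt ℝ B (φ p)) (hdiv : divergence B (φ p) = 0) (u v : Fin 3 → ℝ) :
    HasDerivAt (fun t => fderiv ℝ φ (t, p.2) (0, u) ⬝ᵥ
      fderiv ℝ φ (t, p.2) (0, v) ⨯₃ B (φ (t, p.2))) 0 p.1 := by
  have hvar : ∀ w, HasDerivAt (fun t => fderiv ℝ φ (t, p.2) (0, w))
      (l (φ p) • fderiv ℝ B (φ p) (fderiv ℝ φ p (0, w)) +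
        fderiv ℝ l (φ p) (fderiv ℝ φ p (0, w)) • B (φ p)) p.1 := fun w => by
    simpa [fderiv_fun_smul hl hB] using h.hasDerivAt_fderiv hp hφ (hl.smul hB) w
  have hBφ : HasDerivAt (fun t => B (φ (t, p.2))) (l (φ p) • fderiv ℝ B (φ p) (B (φ p))) p.1 :=
    (hB.hasFDerivAt.comp_hasDerivAt p.1 (h.hasDerivAt p hp)).congr_deriv (by simp)
  refine (hasDerivAt_triple_product (hvar u) (hvar v) hBφ).congr_deriv ?_
  have htrace := triple_product_trace (fderiv ℝ B (φ p) : (Fin 3 → ℝ) →ₗ[ℝ] Fin 3 → ℝ)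
    (fderiv ℝ φ p (0, u)) (fderiv ℝ φ p (0, v)) (B (φ p))
  have hsum : ∑ i, (fderiv ℝ B (φ p) : (Fin 3 → ℝ) →ₗ[ℝ] Fin 3 → ℝ) (Pi.single i 1) i = 0 := hdiv
  rw [hsum, zero_mul] at htrace
  simp only [cross_apply, vec3_dotProduct, cons_val, Pi.add_apply, Pi.smul_apply, smul_eq_mul,
    ContinuousLinearMap.coe_coe] at htrace ⊢
  linear_combination l (φ p) * htrace

theorem IsLocalFlow.flux_eq (h : IsLocalFlow (fun x => l x • B x) Ω φ x₀ δ)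
    (hφ : ContDiffOn ℝ 2 φ (ball (0, x₀) δ)) (hl : ∀ x ∈ Ω, DifferentiableAt ℝ l x)
    (hB : ∀ x ∈ Ω, DifferentiableAt ℝ B x) (hdiv : ∀ x ∈ Ω, divergence B x = 0)
    (hp : p ∈ ball (0, x₀) δ) (u v : Fin 3 → ℝ) :
    fderiv ℝ φ p (0, u) ⬝ᵥ fderiv ℝ φ p (0, v) ⨯₃ B (φ p) = u ⬝ᵥ v ⨯₃ B p.2 := by
  obtain ⟨t, x⟩ := p
  obtain ⟨ht, hx⟩ : t ∈ ball 0 δ ∧ x ∈ ball x₀ δ := by rwa [← ball_prod_same, mem_prod] at hp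
  have hslice : ∀ s ∈ ball (0 : ℝ) δ, (s, x) ∈ ball (0, x₀) δ := fun s hs =>
    ball_prod_same (0 : ℝ) x₀ δ ▸ ⟨hs, hx⟩
  have hφ' : ∀ s ∈ ball (0 : ℝ) δ, ContDiffAt ℝ 2 φ (s, x) := fun s hs =>
    hφ.contDiffAt (isOpen_ball.mem_nhds (hslice s hs))
  have h0 : (0 : ℝ) ∈ ball 0 δ := mem_ball_self (pos_of_mem_ball hx)
  have hflux0 := fun w => h.fderiv_zero_apply_zero_left hx
    ((hφ' 0 h0).differentiableAt two_ne_zero) w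
  have hconst := eq_apply_zero_of_hasDerivAt_zero
    (f := fun s => fderiv ℝ φ (s, x) (0, u) ⬝ᵥ fderiv ℝ φ (s, x) (0, v) ⨯₃ B (φ (s, x)))
    (fun s hs =>
      h.hasDerivAt_flux (hslice s hs) (hφ' s hs) (hl _ (h.mapsTo (hslice s hs)))
        (hB _ (h.mapsTo (hslice s hs))) (hdiv _ (h.mapsTo (hslice s hs))) u v) ht
  simpa only [hflux0, h.apply_zero x hx] using hconst

end Flux

section FluxCoordinates

variable {B : (Fin 3 → ℝ) → Fin 3 → ℝ} {Ω : Set (Fin 3 → ℝ)} {x₀ : Fin 3 → ℝ} {n : ℕ∞}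

theorem exists_contDiffOn_surface_flux_eq (hn : n ≠ 0) (hΩ : IsOpen Ω) (hx₀ : x₀ ∈ Ω)
    (hB : ContDiffOn ℝ n B Ω) (hB₀ : B x₀ ≠ 0) :
    ∃ W : Set (ℝ × ℝ), IsOpen W ∧ 0 ∈ W ∧ ∃ σ : ℝ × ℝ → Fin 3 → ℝ, σ 0 = x₀ ∧
      ContDiffOn ℝ n σ W ∧ ∀ p ∈ W, ∀ a b,
        fderiv ℝ σ p a ⬝ᵥ fderiv ℝ σ p b ⨯₃ B (σ p) = a.1 * b.2 - a.2 * b.1 := by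
  obtain ⟨e₁, e₂, he⟩ := exists_triple_product_ne_zero hB₀
  let g : (Fin 3 → ℝ) → ℝ := fun x => e₁ ⬝ᵥ e₂ ⨯₃ B x
  have hg : ContDiffOn ℝ n g Ω :=
    (dotProductBilin ℝ ℝ e₁ ∘ₗ crossProduct e₂).toContinuousLinearMap.contDiff.comp_contDiffOn hB
  -- Along the flow of a multiple of `e₁` the product `e₁ ⨯₃ ∂₂σ` is constant, so the flux density
  -- of the resulting surface is `g⁻¹ * g = 1`.
  have hw : ContDiffOn ℝ n (fun x => (g x)⁻¹ • e₁) (Ω ∩ g ⁻¹' {0}ᶜ) :=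
    ((hg.mono inter_subset_left).inv fun _ hx => hx.2).smul contDiffOn_const
  obtain ⟨δ, hδ, φ, hφ, h⟩ := exists_isLocalFlow hn
    (hg.continuousOn.isOpen_inter_preimage hΩ isOpen_compl_singleton) hw ⟨hx₀, he⟩
  let c : ℝ × ℝ → ℝ × (Fin 3 → ℝ) := fun p => (p.1, x₀ + p.2 • e₂)
  have hc : ContDiff ℝ n c := by fun_prop
  have hc0 : c 0 = (0, x₀) := by simp [c]
  refine ⟨c ⁻¹' ball (0, x₀) δ, isOpen_ball.preimage hc.continuous,
    by simpa [hc0] using hδ, φ ∘ c, by simp [hc0, h.apply_zero x₀ (mem_ball_self hδ)],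
    hφ.comp hc.contDiffOn fun _ hp => hp, fun p hp a b => ?_⟩
  have hφp : DifferentiableAt ℝ φ (c p) :=
    (hφ.contDiffAt (isOpen_ball.mem_nhds hp)).differentiableAt (mod_cast hn)
  set f₂ : Fin 3 → ℝ := fderiv ℝ φ (c p) (0, e₂)
  have hσ : ∀ a, fderiv ℝ (φ ∘ c) p a = a.1 • ((g (φ (c p)))⁻¹ • e₁) + a.2 • f₂ := fun a => by
    have hcp : HasFDerivAt c ((ContinuousLinearMap.fst ℝ ℝ ℝ).prod
        ((ContinuousLinearMap.snd ℝ ℝ ℝ).smulRight e₂)) p :=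
      hasFDerivAt_fst.prodMk ((hasFDerivAt_snd.smul_const e₂).const_add x₀)
    rw [(hφp.hasFDerivAt.comp p hcp).fderiv, ← map_smul]
    simpa using h.fderiv_apply hφp hp (a.1, a.2 • e₂)
  have hcross : e₁ ⨯₃ f₂ = e₁ ⨯₃ e₂ :=
    h.clm_fderiv_apply (L := (crossProduct e₁).toContinuousLinearMap) (by simp) hφp hp (0, e₂)
  have hflux : e₁ ⬝ᵥ f₂ ⨯₃ B (φ (c p)) = g (φ (c p)) := by
    rw [← triple_product_permutation, hcross, triple_product_permutation]
  have hg0 : g (φ (c p)) ≠ 0 := (h.mapsTo hp).2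
  rw [hσ, hσ, triple_product_smul_add_smul, smul_dotProduct, Function.comp_apply, hflux,
    smul_eq_mul, inv_mul_cancel₀ hg0, mul_one]

theorem exists_straightening {l : (Fin 3 → ℝ) → ℝ} (hn : 2 ≤ n) (hΩ : IsOpen Ω) (hx₀ : x₀ ∈ Ω)
    (hl : ContDiffOn ℝ n l Ω) (hB : ContDiffOn ℝ n B Ω) (hdiv : ∀ x ∈ Ω, divergence B x = 0)
    (hB₀ : B x₀ ≠ 0) :
    ∃ W : Set (Fin 3 → ℝ), IsOpen W ∧ 0 ∈ W ∧ ∃ χ : (Fin 3 → ℝ) → Fin 3 → ℝ, χ 0 = x₀ ∧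
      ContDiffOn ℝ n χ W ∧ MapsTo χ W Ω ∧ ∀ q ∈ W,
        fderiv ℝ χ q (Pi.single 2 1) = l (χ q) • B (χ q) ∧
        ∀ u v, fderiv ℝ χ q u ⬝ᵥ fderiv ℝ χ q v ⨯₃ B (χ q) = u 0 * v 1 - u 1 * v 0 := by
  have hn0 : n ≠ 0 := (two_pos.trans_le hn).ne'
  have hn0' : (n : WithTop ℕ∞) ≠ 0 := mod_cast hn0
  obtain ⟨W, hW, h0W, σ, hσ0, hσ, hσflux⟩ := exists_contDiffOn_surface_flux_eq hn0 hΩ hx₀ hB hB₀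
  obtain ⟨δ, hδ, φ, hφ, h⟩ := exists_isLocalFlow hn0 hΩ (hl.smul hB) hx₀
  let π : (Fin 3 → ℝ) →L[ℝ] ℝ × ℝ := (ContinuousLinearMap.proj 0).prod (ContinuousLinearMap.proj 1)
  let c : (Fin 3 → ℝ) → ℝ × (Fin 3 → ℝ) := fun q => (q 2, σ (π q))
  have hc : ContDiffOn ℝ n c (π ⁻¹' W) :=
    (contDiff_apply ℝ ℝ 2).contDiffOn.prodMk (hσ.comp π.contDiff.contDiffOn fun _ hq => hq)
  have hc0 : c 0 = (0, x₀) := by simp [c, hσ0]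
  refine ⟨π ⁻¹' W ∩ c ⁻¹' ball (0, x₀) δ,
    hc.continuousOn.isOpen_inter_preimage (hW.preimage π.continuous) isOpen_ball,
    ⟨by simpa using h0W, by simpa [hc0] using hδ⟩, φ ∘ c,
    by simp [hc0, h.apply_zero x₀ (mem_ball_self hδ)],
    hφ.comp (hc.mono inter_subset_left) fun _ hq => hq.2, fun _ hq => h.mapsTo hq.2, ?_⟩
  rintro q ⟨hqW, hq⟩
  have hφq : DifferentiableAt ℝ φ (c q) :=
    (hφ.contDiffAt (isOpen_ball.mem_nhds hq)).differentiableAt hn0'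
  have hσq : DifferentiableAt ℝ σ (π q) :=
    (hσ.contDiffAt (hW.mem_nhds hqW)).differentiableAt hn0'
  have hχ : ∀ u, fderiv ℝ (φ ∘ c) q u = u 2 • l (φ (c q)) • B (φ (c q)) +
      fderiv ℝ φ (c q) (0, fderiv ℝ σ (π q) (π u)) := fun u => by
    have hcq : HasFDerivAt c ((ContinuousLinearMap.proj 2).prod (fderiv ℝ σ (π q) ∘L π)) q :=
      (hasFDerivAt_apply 2 q).prodMk (hσq.hasFDerivAt.comp q π.hasFDerivAt)
    rw [(hφq.hasFDerivAt.comp q hcq).fderiv]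
    exact h.fderiv_apply hφq hq _
  have hflow := h.flux_eq (hφ.of_le (WithTop.coe_le_coe.2 hn))
    (fun x hx => (hl.contDiffAt (hΩ.mem_nhds hx)).differentiableAt hn0')
    (fun x hx => (hB.contDiffAt (hΩ.mem_nhds hx)).differentiableAt hn0') hdiv hq
  refine ⟨?_, fun u v => ?_⟩
  · have hπ : π (Pi.single 2 1) = 0 := by simp [π]
    rw [hχ, hπ, map_zero, Prod.mk_zero_zero, map_zero, add_zero, Pi.single_eq_same, one_smul]
    rfl
  · rw [hχ, hχ, smul_smul, smul_smul, Function.comp_apply, triple_product_smul_add_right, hflow]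
    exact hσflux _ hqW _ _

theorem exists_openPartialHomeomorph_straightening {l : (Fin 3 → ℝ) → ℝ} (hn : 2 ≤ n)
    (hΩ : IsOpen Ω) (hx₀ : x₀ ∈ Ω) (hl : ContDiffOn ℝ n l Ω) (hB : ContDiffOn ℝ n B Ω)
    (hdiv : ∀ x ∈ Ω, divergence B x = 0) (hl₀ : l x₀ ≠ 0) (hB₀ : B x₀ ≠ 0) :
    ∃ P : OpenPartialHomeomorph (Fin 3 → ℝ) (Fin 3 → ℝ), 0 ∈ P.source ∧ P 0 = x₀ ∧
      P.target ⊆ Ω ∧ ContDiffOn ℝ n P P.source ∧ ContDiffOn ℝ n P.symm P.target ∧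
      ∀ q ∈ P.source, fderiv ℝ P q (Pi.single 2 1) = l (P q) • B (P q) ∧
        ∀ u v, fderiv ℝ P q u ⬝ᵥ fderiv ℝ P q v ⨯₃ B (P q) = u 0 * v 1 - u 1 * v 0 := by
  obtain ⟨W, hW, h0W, χ, hχ0, hχ, hχΩ, hχW⟩ := exists_straightening hn hΩ hx₀ hl hB hdiv hB₀
  have hn0 : (n : WithTop ℕ∞) ≠ 0 := mod_cast (two_pos.trans_le hn).ne'
  obtain ⟨hfield, hflux⟩ := hχW 0 h0W
  have hinj : Function.Injective (fderiv ℝ χ 0 : (Fin 3 → ℝ) →ₗ[ℝ] Fin 3 → ℝ) :=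
    injective_of_triple_product_eq hflux (by simp [hfield, hχ0, hl₀, hB₀])
  let e := (LinearEquiv.ofInjectiveEndo _ hinj).toContinuousLinearEquiv
  have he : HasFDerivAt χ (e : (Fin 3 → ℝ) →L[ℝ] Fin 3 → ℝ) 0 :=
    ((hχ.contDiffAt (hW.mem_nhds h0W)).differentiableAt hn0).hasFDerivAt
  obtain ⟨P, rfl, h0P, hPW, hPsymm⟩ :=
    exists_openPartialHomeomorph_contDiffOn_symm hn0 hW hχ h0W he
  refine ⟨P, h0P, hχ0, ?_, hχ.mono hPW, hPsymm, fun q hq => hχW q (hPW hq)⟩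
  rw [← P.image_source_eq_target]
  exact (hχΩ.mono_left hPW).image_subset

end FluxCoordinates

theorem statement2_general {n : ℕ∞} (hn : 2 ≤ n) {Ω : Set (Fin 3 → ℝ)} (hΩ : IsOpen Ω)
    {x₀ : Fin 3 → ℝ} (hx₀ : x₀ ∈ Ω) {B : (Fin 3 → ℝ) → Fin 3 → ℝ} (hB : ContDiffOn ℝ n B Ω)
    (hdiv : ∀ x ∈ Ω, divergence B x = 0) (hB₀ : B x₀ ≠ 0) :
    ∃ U V : Set (Fin 3 → ℝ), IsOpen U ∧ IsOpen V ∧ 0 ∈ U ∧ x₀ ∈ V ∧ V ⊆ Ω ∧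
      ∃ χ ψ : (Fin 3 → ℝ) → (Fin 3 → ℝ),
        χ 0 = x₀ ∧ ContDiffOn ℝ n χ U ∧ ContDiffOn ℝ n ψ V ∧
        BijOn χ U V ∧ (∀ q ∈ U, ψ (χ q) = q) ∧ (∀ q ∈ V, χ (ψ q) = q) ∧
        ∀ q ∈ U, fderiv ℝ χ q (Pi.single 2 1) = (norm3 (B (χ q)))⁻¹ • B (χ q) ∧
          ∀ u v, fderiv ℝ χ q u ⬝ᵥ fderiv ℝ χ q v ⨯₃ B (χ q) = u 0 * v 1 - u 1 * v 0 := by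
  have hΩ' : IsOpen (Ω ∩ B ⁻¹' {0}ᶜ) :=
    hB.continuousOn.isOpen_inter_preimage hΩ isOpen_compl_singleton
  have hB' : ContDiffOn ℝ n B (Ω ∩ B ⁻¹' {0}ᶜ) := hB.mono inter_subset_left
  have hl : ContDiffOn ℝ n (fun x => (norm3 (B x))⁻¹) (Ω ∩ B ⁻¹' {0}ᶜ) :=
    (contDiffOn_norm3 hB' fun _ hx => hx.2).inv fun _ hx => norm3_ne_zero hx.2
  obtain ⟨P, h0P, hP0, hPΩ, hP, hPsymm, hPB⟩ := exists_openPartialHomeomorph_straightening hn hΩ'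
    ⟨hx₀, hB₀⟩ hl hB' (fun x hx => hdiv x hx.1) (inv_ne_zero (norm3_ne_zero hB₀)) hB₀
  exact ⟨P.source, P.target, P.open_source, P.open_target, h0P, hP0 ▸ P.map_source h0P,
    hPΩ.trans inter_subset_left, P, P.symm, hP0, hP, hPsymm, P.bijOn,
    fun _ => P.left_inv, fun _ => P.right_inv, hPB⟩

/-- Existence of local coordinates straightening the magnetic field direction and
normalizing the magnetic two-form: if `B(0) = (∇×A)(0) ≠ 0`, there is a local smooth
diffeomorphism `χ` between neighborhoods of `0` with `χ(0) = 0`, `∂₃χ = (B/‖B‖)∘χ`, and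
`χ*(dα) = dq̂₁ ∧ dq̂₂`, where `dα_q(U,V) = ⟨U, V × B(q)⟩`. -/
theorem statement2 (A : (Fin 3 → ℝ) → (Fin 3 → ℝ)) (hA : ContDiff ℝ (⊤ : ℕ∞) A)
    (hB0 : curl A 0 ≠ 0) :
    ∃ U V : Set (Fin 3 → ℝ), IsOpen U ∧ IsOpen V ∧
      (0 : Fin 3 → ℝ) ∈ U ∧ (0 : Fin 3 → ℝ) ∈ V ∧
      ∃ χ ψ : (Fin 3 → ℝ) → (Fin 3 → ℝ),
        χ 0 = 0 ∧
        ContDiffOn ℝ (⊤ : ℕ∞) χ U ∧ ContDiffOn ℝ (⊤ : ℕ∞) ψ V ∧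
        Set.BijOn χ U V ∧ (∀ q ∈ U, ψ (χ q) = q) ∧ (∀ q ∈ V, χ (ψ q) = q) ∧
        ∀ qh ∈ U,
          (fderiv ℝ χ qh (Pi.single 2 1) = (norm3 (curl A (χ qh)))⁻¹ • curl A (χ qh)) ∧
          ∀ u v : Fin 3 → ℝ,
            (fderiv ℝ χ qh u) ⬝ᵥ crossProduct (fderiv ℝ χ qh v) (curl A (χ qh)) =
              u 0 * v 1 - u 1 * v 0 := by
  obtain ⟨U, V, hU, hV, h0U, h0V, -, hχ⟩ := statement2_general le_top isOpen_univ (mem_univ 0)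
    (contDiff_curl hA le_rfl).contDiffOn
    (fun x _ => divergence_curl (hA.of_le (WithTop.coe_le_coe.2 le_top)) x) hB0
  exact ⟨U, V, hU, hV, h0U, h0V, hχ⟩
end
end

section
/- Let A : ℝ³ → ℝ³ be a smooth vector potential with magnetic field B = ∇×A, let q ∈ ℝ³ with B(q) ≠ 0, and let (b, c, d) be a direct (positively oriented) orthonormal basis of ℝ³ with b = B(q)/‖B(q)‖. Define f₄ = ‖B(q)‖^{-1/2}(c, DA(q)ᵀc) and f₅ = ‖B(q)‖^{-1/2}(d, DA(q)ᵀd) in ℝ³×ℝ³. Then ω₀(f₄, f₅) = −1. -/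
open Matrix

noncomputable section

/-!
The symplectic form of two graph vectors `(u, DA(q)ᵀu)` and `(v, DA(q)ᵀv)` is
`⟨DA(q)v, u⟩ - ⟨DA(q)u, v⟩`, so it sees only `DA(q) - DA(q)ᵀ`, and in dimension three this is the
map `B(q) × ·`: the form equals `-⟨B(q), u × v⟩`. The two factors `‖B(q)‖^{-1/2}` then turn `B(q)`
into the unit vector `b`, and `ω₀(f₄, f₅) = -[b, c, d]`.
-/

theorem norm3_nonneg (v : Fin 3 → ℝ) : 0 ≤ norm3 v :=
  Real.sqrt_nonneg _

theorem omega0_smul_smul (r s : ℝ) (x y : (Fin 3 → ℝ) × (Fin 3 → ℝ)) :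
    omega0 (r • x) (s • y) = r * s * omega0 x y := by
  simp only [omega0, Prod.smul_fst, Prod.smul_snd, smul_dotProduct, dotProduct_smul, smul_eq_mul]
  ring

theorem dotProduct_adjoint3 (L : (Fin 3 → ℝ) →L[ℝ] (Fin 3 → ℝ)) (v w : Fin 3 → ℝ) :
    v ⬝ᵥ adjoint3 L w = L v ⬝ᵥ w := by
  have hLv : L v = ∑ i, v i • L (Pi.single i 1) := by
    simpa only [Pi.basisFun_repr, Pi.basisFun_apply, map_sum, map_smul] using
      congrArg L ((Pi.basisFun ℝ (Fin 3)).sum_repr v).symm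
  calc
    v ⬝ᵥ adjoint3 L w = ∑ i, v i * (L (Pi.single i 1) ⬝ᵥ w) := rfl
    _ = L v ⬝ᵥ w := by
      simp only [hLv, sum_dotProduct, smul_dotProduct, smul_eq_mul]

theorem omega0_adjoint3 (L : (Fin 3 → ℝ) →L[ℝ] (Fin 3 → ℝ)) (u v : Fin 3 → ℝ) :
    omega0 (u, adjoint3 L u) (v, adjoint3 L v) = L v ⬝ᵥ u - L u ⬝ᵥ v := by
  rw [omega0, dotProduct_comm (adjoint3 L v), dotProduct_adjoint3, dotProduct_adjoint3]

theorem curl_dotProduct_cross {A : (Fin 3 → ℝ) → (Fin 3 → ℝ)} {q : Fin 3 → ℝ}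
    (hA : DifferentiableAt ℝ A q) (u v : Fin 3 → ℝ) :
    curl A q ⬝ᵥ u ⨯₃ v = fderiv ℝ A q u ⬝ᵥ v - fderiv ℝ A q v ⬝ᵥ u := by
  have hcoord (i : Fin 3) (w : Fin 3 → ℝ) :
      fderiv ℝ (fun x => A x i) q w = fderiv ℝ A q w i :=
    DFunLike.congr_fun (fderiv_apply hA i) w
  rw [← dotProduct_adjoint3 _ u, ← dotProduct_adjoint3 _ v]
  simp only [curl, hcoord, adjoint3, cross_apply, dotProduct, Fin.sum_univ_three, cons_val]
  ring

theorem omega0_adjoint3_fderiv {A : (Fin 3 → ℝ) → (Fin 3 → ℝ)} {q : Fin 3 → ℝ}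
    (hA : DifferentiableAt ℝ A q) (u v : Fin 3 → ℝ) :
    omega0 (u, adjoint3 (fderiv ℝ A q) u) (v, adjoint3 (fderiv ℝ A q) v) =
      -(curl A q ⬝ᵥ u ⨯₃ v) := by
  rw [omega0_adjoint3, curl_dotProduct_cross hA, neg_sub]

theorem rpow_neg_half_mul_self {x : ℝ} (hx : 0 ≤ x) :
    x ^ (-(1 : ℝ) / 2) * x ^ (-(1 : ℝ) / 2) = x⁻¹ := by
  rw [← sq, ← Real.rpow_mul_natCast hx, ← Real.rpow_neg_one]
  norm_num

theorem statement5_general {A : (Fin 3 → ℝ) → (Fin 3 → ℝ)} {q : Fin 3 → ℝ}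
    (hA : DifferentiableAt ℝ A q) {b c d : Fin 3 → ℝ}
    (hb : b = (norm3 (curl A q))⁻¹ • curl A q) (hdirect : b ⬝ᵥ c ⨯₃ d = 1) :
    omega0 ((norm3 (curl A q) ^ (-(1 : ℝ) / 2)) • (c, adjoint3 (fderiv ℝ A q) c))
      ((norm3 (curl A q) ^ (-(1 : ℝ) / 2)) • (d, adjoint3 (fderiv ℝ A q) d)) = -1 := by
  calc
    _ = (norm3 (curl A q))⁻¹ * -(curl A q ⬝ᵥ c ⨯₃ d) := by
      rw [omega0_smul_smul, rpow_neg_half_mul_self (norm3_nonneg _), omega0_adjoint3_fderiv hA]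
    _ = -(b ⬝ᵥ c ⨯₃ d) := by
      rw [hb, smul_dotProduct, smul_eq_mul, mul_neg]
    _ = -1 := by
      rw [hdirect]

/-- With `B(q) = (∇×A)(q) ≠ 0` and a direct orthonormal basis `(b,c,d)`, `b = B(q)/‖B(q)‖`,
the vectors `f₄ = ‖B(q)‖^{-1/2}(c, DA(q)ᵀc)` and `f₅ = ‖B(q)‖^{-1/2}(d, DA(q)ᵀd)` satisfy
`ω₀(f₄,f₅) = −1`. -/
theorem statement5 (A : (Fin 3 → ℝ) → (Fin 3 → ℝ)) (hA : ContDiff ℝ (⊤ : ℕ∞) A)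
    (q : Fin 3 → ℝ) (hBq : curl A q ≠ 0)
    (b c d : Fin 3 → ℝ) (hb : b = (norm3 (curl A q))⁻¹ • curl A q)
    (hcc : c ⬝ᵥ c = 1) (hdd : d ⬝ᵥ d = 1)
    (hbc : b ⬝ᵥ c = 0) (hbd : b ⬝ᵥ d = 0) (hcd : c ⬝ᵥ d = 0)
    (hdirect : b ⬝ᵥ crossProduct c d = 1) :
    omega0 (((norm3 (curl A q)) ^ (-(1 : ℝ)/2)) • (c, adjoint3 (fderiv ℝ A q) c))
        (((norm3 (curl A q)) ^ (-(1 : ℝ)/2)) • (d, adjoint3 (fderiv ℝ A q) d)) = -1 :=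
  statement5_general (hA.contDiffAt.differentiableAt (by simp)) hb hdirect
end
end

section
/- Let ν : ℝ² → (0,∞) be smooth, set γ = ln ν, and define C : ℝ⁴ → ℝ⁴ (coordinates (x₂,ξ₂,x₃,ξ₃)) by C(x₂,ξ₂,x₃,ξ₃) = (x₂ + ∂_{ξ₂}γ(x₂,ξ₂) x₃ξ₃, ξ₂ − ∂_{x₂}γ(x₂,ξ₂) x₃ξ₃, ν(x₂,ξ₂)x₃, ν(x₂,ξ₂)^{-1}ξ₃). Then at every point p with x₃ = 0 and ξ₃ = 0, the Jacobian determinant of C equals 1 (in particular DC(p) is invertible), and ω₀(DC(p)u, DC(p)v) = ω₀(u,v) for all u, v ∈ ℝ⁴. -/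
noncomputable section

/-- The canonical symplectic form on `ℝ⁴` with coordinates `(x₂,ξ₂,x₃,ξ₃)`:
`ω₀((a,b,c,d),(a',b',c',d')) = a'b − ab' + c'd − cd'`. -/
def omega4 (u v : ℝ × ℝ × ℝ × ℝ) : ℝ :=
  v.1 * u.2.1 - u.1 * v.2.1 + v.2.2.1 * u.2.2.2 - u.2.2.1 * v.2.2.2

/-
The correction terms carry the factor `x₃ξ₃`, which vanishes to second order on the submanifold
`x₃ = ξ₃ = 0`. They therefore contribute nothing to the derivative there, and `DC(p)` is the
diagonal map `(1, 1, ν, ν⁻¹)`, which is symplectic because `ν · ν⁻¹ = 1`.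
-/

open ContinuousLinearMap (id fst snd)

open scoped Topology

section Derivative

variable {𝕜 : Type*} [NontriviallyNormedField 𝕜]

theorem hasFDerivAt_smul_of_continuousAt_of_eq_zero {E F : Type*}
    [NormedAddCommGroup E] [NormedSpace 𝕜 E] [NormedAddCommGroup F] [NormedSpace 𝕜 F]
    {f : E → 𝕜} {g : E → F} {g' : E →L[𝕜] F} {x : E}
    (hf : ContinuousAt f x) (hg : HasFDerivAt g g' x) (hgx : g x = 0) :
    HasFDerivAt (fun y => f y • g y) (f x • g') x := by
  have hf_sub : (fun y => f y - f x) =o[𝓝 x] (fun _ => (1 : 𝕜)) :=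
    (Asymptotics.isLittleO_one_iff 𝕜).2 (tendsto_sub_nhds_zero_iff.2 hf)
  have hg_bound : g =O[𝓝 x] (fun y => y - x) := by
    simpa only [hgx, sub_zero] using hg.isBigO_sub
  have h_remainder : HasFDerivAt (fun y => (f y - f x) • g y) (0 : E →L[𝕜] F) x :=
    .of_isLittleO <| by simpa [hgx] using hf_sub.smul_isBigO hg_bound
  have h_split : (fun y => f y • g y) = (fun y => (f y - f x) • g y) + f x • g := by
    ext y
    simp [sub_smul]
  rw [h_split]
  simpa only [zero_add] using h_remainder.add (hg.const_smul (f x))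

/-- The diagonal linear map `(x₂, ξ₂, x₃, ξ₃) ↦ (x₂, ξ₂, c x₃, d ξ₃)`, which fixes the directions
tangent to the submanifold `x₃ = ξ₃ = 0` and rescales the two normal ones. -/
def normalScaling (c d : 𝕜) : 𝕜 × 𝕜 × 𝕜 × 𝕜 →L[𝕜] 𝕜 × 𝕜 × 𝕜 × 𝕜 :=
  (id 𝕜 𝕜).prodMap ((id 𝕜 𝕜).prodMap ((c • id 𝕜 𝕜).prodMap (d • id 𝕜 𝕜)))

@[simp]
theorem normalScaling_apply (c d : 𝕜) (u : 𝕜 × 𝕜 × 𝕜 × 𝕜) :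
    normalScaling c d u = (u.1, u.2.1, c * u.2.2.1, d * u.2.2.2) :=
  rfl

theorem det_normalScaling (c d : 𝕜) :
    LinearMap.det (normalScaling c d).toLinearMap = c * d := by
  simp [normalScaling, LinearMap.det_prodMap]

/-- The self-map of `𝕜⁴` that rescales the normal coordinates `x₃`, `ξ₃` by functions `s`, `t` and
corrects `x₂`, `ξ₂` by multiples of `x₃ξ₃`. The map `C` of the theorem is the case
`a = ∂_{ξ₂}γ`, `b = ∂_{x₂}γ`, `s = ν`, `t = ν⁻¹`. -/
def normalDeformation (a b s t : 𝕜 × 𝕜 × 𝕜 × 𝕜 → 𝕜) (x : 𝕜 × 𝕜 × 𝕜 × 𝕜) :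
    𝕜 × 𝕜 × 𝕜 × 𝕜 :=
  (x.1 + a x * (x.2.2.1 * x.2.2.2), x.2.1 - b x * (x.2.2.1 * x.2.2.2),
    s x * x.2.2.1, t x * x.2.2.2)

theorem hasFDerivAt_normalDeformation {a b s t : 𝕜 × 𝕜 × 𝕜 × 𝕜 → 𝕜} {p : 𝕜 × 𝕜 × 𝕜 × 𝕜}
    (ha : ContinuousAt a p) (hb : ContinuousAt b p) (hs : ContinuousAt s p)
    (ht : ContinuousAt t p) (hp₃ : p.2.2.1 = 0) (hp₄ : p.2.2.2 = 0) :
    HasFDerivAt (normalDeformation a b s t) (normalScaling (s p) (t p)) p := by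
  have hx₂ : HasFDerivAt (fun x : 𝕜 × 𝕜 × 𝕜 × 𝕜 => x.1) (fst 𝕜 𝕜 (𝕜 × 𝕜 × 𝕜)) p :=
    hasFDerivAt_fst
  have htail : HasFDerivAt (fun x : 𝕜 × 𝕜 × 𝕜 × 𝕜 => x.2) (snd 𝕜 𝕜 (𝕜 × 𝕜 × 𝕜)) p :=
    hasFDerivAt_snd
  have hξ₂ := htail.fst
  have hx₃ := htail.snd.fst
  have hξ₃ := htail.snd.snd
  have hx₃ξ₃ : HasFDerivAt (fun x : 𝕜 × 𝕜 × 𝕜 × 𝕜 => x.2.2.1 * x.2.2.2)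
      (0 : 𝕜 × 𝕜 × 𝕜 × 𝕜 →L[𝕜] 𝕜) p :=
    (hx₃.mul hξ₃).congr_fderiv (by ext <;> simp [hp₃, hp₄])
  have hx₃ξ₃_zero : p.2.2.1 * p.2.2.2 = 0 := by rw [hp₃, zero_mul]
  have h_first := hx₂.add (hasFDerivAt_smul_of_continuousAt_of_eq_zero ha hx₃ξ₃ hx₃ξ₃_zero)
  have h_second := hξ₂.sub (hasFDerivAt_smul_of_continuousAt_of_eq_zero hb hx₃ξ₃ hx₃ξ₃_zero)
  have h_third := hasFDerivAt_smul_of_continuousAt_of_eq_zero hs hx₃ hp₃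
  have h_fourth := hasFDerivAt_smul_of_continuousAt_of_eq_zero ht hξ₃ hp₄
  refine (h_first.prodMk (h_second.prodMk (h_third.prodMk h_fourth))).congr_fderiv ?_
  ext <;> simp

end Derivative

theorem omega4_normalScaling {c d : ℝ} (hcd : c * d = 1) (u v : ℝ × ℝ × ℝ × ℝ) :
    omega4 (normalScaling c d u) (normalScaling c d v) = omega4 u v := by
  simp only [omega4, normalScaling_apply]
  linear_combination (v.2.2.1 * u.2.2.2 - u.2.2.1 * v.2.2.2) * hcd

theorem continuousAt_fderiv_log {E : Type*} [NormedAddCommGroup E] [NormedSpace ℝ E]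
    {f : E → ℝ} {x : E} (hf : ContDiffAt ℝ 1 f x) (hfx : f x ≠ 0) :
    ContinuousAt (fderiv ℝ (fun y => Real.log (f y))) x :=
  ((hf.log hfx).fderiv_right (m := 0) (by simp)).continuousAt

theorem statement13_general {ν : ℝ × ℝ → ℝ} {p : ℝ × ℝ × ℝ × ℝ}
    (hν : ContDiffAt ℝ 1 ν (p.1, p.2.1)) (hνpos : 0 < ν (p.1, p.2.1))
    {C : ℝ × ℝ × ℝ × ℝ → ℝ × ℝ × ℝ × ℝ}
    (hC : ∀ᶠ x in 𝓝 p, C x =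
      (x.1 + fderiv ℝ (fun q => Real.log (ν q)) (x.1, x.2.1) (0, 1) * (x.2.2.1 * x.2.2.2),
       x.2.1 - fderiv ℝ (fun q => Real.log (ν q)) (x.1, x.2.1) (1, 0) * (x.2.2.1 * x.2.2.2),
       ν (x.1, x.2.1) * x.2.2.1,
       (ν (x.1, x.2.1))⁻¹ * x.2.2.2))
    (hp₃ : p.2.2.1 = 0) (hp₄ : p.2.2.2 = 0) :
    LinearMap.det (fderiv ℝ C p).toLinearMap = 1 ∧
      ∀ u v, omega4 (fderiv ℝ C p u) (fderiv ℝ C p v) = omega4 u v := by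
  have hbase : ContinuousAt (fun x : ℝ × ℝ × ℝ × ℝ => (x.1, x.2.1)) p := by fun_prop
  have hdγ (w : ℝ × ℝ) : ContinuousAt
      (fun x : ℝ × ℝ × ℝ × ℝ => fderiv ℝ (fun q => Real.log (ν q)) (x.1, x.2.1) w) p :=
    ((continuousAt_fderiv_log hν hνpos.ne').comp_of_eq hbase rfl).clm_apply continuousAt_const
  have hνbase : ContinuousAt (fun x : ℝ × ℝ × ℝ × ℝ => ν (x.1, x.2.1)) p :=
    hν.continuousAt.comp_of_eq hbase rfl
  have hDC : fderiv ℝ C p = normalScaling (ν (p.1, p.2.1)) (ν (p.1, p.2.1))⁻¹ :=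
    ((hasFDerivAt_normalDeformation (hdγ (0, 1)) (hdγ (1, 0)) hνbase (hνbase.inv₀ hνpos.ne')
      hp₃ hp₄).congr_of_eventuallyEq hC).fderiv
  have hν_mul_inv := mul_inv_cancel₀ hνpos.ne'
  rw [hDC]
  exact ⟨(det_normalScaling _ _).trans hν_mul_inv, omega4_normalScaling hν_mul_inv⟩

/-- With `ν > 0` smooth and `γ = ln ν`, the map
`C(x₂,ξ₂,x₃,ξ₃) = (x₂ + ∂_{ξ₂}γ·x₃ξ₃, ξ₂ − ∂_{x₂}γ·x₃ξ₃, νx₃, ν⁻¹ξ₃)` has Jacobian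
determinant `1` at each point with `x₃ = ξ₃ = 0`, and its differential there preserves the
canonical symplectic form. -/
theorem statement13 (ν : ℝ × ℝ → ℝ) (hν : ContDiff ℝ (⊤ : ℕ∞) ν) (hνpos : ∀ p, 0 < ν p)
    (C : ℝ × ℝ × ℝ × ℝ → ℝ × ℝ × ℝ × ℝ)
    (hC : ∀ x : ℝ × ℝ × ℝ × ℝ, C x =
      (x.1 + fderiv ℝ (fun p => Real.log (ν p)) (x.1, x.2.1) ((0, 1) : ℝ × ℝ) *
          (x.2.2.1 * x.2.2.2),
       x.2.1 - fderiv ℝ (fun p => Real.log (ν p)) (x.1, x.2.1) ((1, 0) : ℝ × ℝ) *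
          (x.2.2.1 * x.2.2.2),
       ν (x.1, x.2.1) * x.2.2.1,
       (ν (x.1, x.2.1))⁻¹ * x.2.2.2))
    (p : ℝ × ℝ × ℝ × ℝ) (hp3 : p.2.2.1 = 0) (hp4 : p.2.2.2 = 0) :
    LinearMap.det ((fderiv ℝ C p).toLinearMap) = 1 ∧
    ∀ u v : ℝ × ℝ × ℝ × ℝ,
      omega4 (fderiv ℝ C p u) (fderiv ℝ C p v) = omega4 u v :=
  statement13_general (hν.of_le (by norm_cast)).contDiffAt (hνpos _) (.of_forall hC) hp3 hp4
end
end

section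
/- Let k : ℝ² → ℝ be a smooth function such that k(h,Z) = O((h² + |Z|)^{3/2}) as (h,Z) → (0,0). Then k(0,0) = 0, ∂₁k(0,0) = 0, ∂₂k(0,0) = 0 and ∂₁²k(0,0) = 0 (where ∂₁, ∂₂ denote partial derivatives in h and Z respectively). -/
noncomputable section

/-!
Only `k(x, y) = o(‖x‖² + ‖y‖)` matters. Since `‖x‖² + ‖y‖ = O(‖(x, y)‖)` near the origin, `k` and
its derivative vanish there. On the slice `y = 0` the function is `o(‖x‖²)`, so its second
difference quotients tend to zero; they also converge to its second derivative, which therefore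
vanishes.
-/

open Asymptotics Filter Topology

section GrowthRates

lemma eq_zero_of_smul_const_isLittleO {α 𝕜 E : Type*} [NormedField 𝕜] [NormedAddCommGroup E]
    [NormedSpace 𝕜 E] {l : Filter α} [l.NeBot] {φ : α → 𝕜} {c : E} (hφ : ∀ᶠ t in l, φ t ≠ 0)
    (hc : (fun t ↦ φ t • c) =o[l] φ) : c = 0 := by
  have hquot : (fun t ↦ (φ t)⁻¹ • φ t • c) =o[l] fun t ↦ (φ t)⁻¹ • φ t :=
    (isBigO_refl (fun t ↦ (φ t)⁻¹) l).smul_isLittleO hc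
  refine (isLittleO_const_const_iff (c := (1 : 𝕜))).1 (hquot.congr' ?_ ?_)
  · filter_upwards [hφ] with t ht using inv_smul_smul₀ ht c
  · filter_upwards [hφ] with t ht using inv_mul_cancel₀ ht

lemma isLittleO_rpow_self_of_tendsto_zero {α : Type*} {l : Filter α} {g : α → ℝ} {r : ℝ}
    (hr : 1 < r) (hg₀ : ∀ x, 0 ≤ g x) (hg : Tendsto g l (𝓝 0)) : (fun x ↦ g x ^ r) =o[l] g := by
  have hpow : (fun x ↦ g x ^ (r - 1)) =o[l] fun _ ↦ (1 : ℝ) := by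
    rw [isLittleO_one_iff]
    simpa [Real.zero_rpow (sub_pos.2 hr).ne'] using hg.rpow_const (.inr (sub_pos.2 hr).le)
  refine (hpow.mul_isBigO (isBigO_refl g l)).congr (fun x ↦ ?_) fun x ↦ one_mul _
  rw [← Real.rpow_add_one' (hg₀ x) (by linarith), sub_add_cancel]

end GrowthRates

section SecondDerivative

variable {E F : Type*} [NormedAddCommGroup E] [NormedSpace ℝ E] [NormedAddCommGroup F]

lemma tendsto_add_smul_nhdsGT_zero (x v : E) :
    Tendsto (fun t : ℝ ↦ x + t • v) (𝓝[>] 0) (𝓝 x) := by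
  have hcont : Continuous fun t : ℝ ↦ x + t • v := by fun_prop
  simpa using (hcont.tendsto 0).mono_left nhdsWithin_le_nhds

lemma isLittleO_sq_along_ray {f : E → F} {x : E} (hf : f =o[𝓝 x] fun y ↦ ‖y - x‖ ^ 2) (v : E) :
    (fun t : ℝ ↦ f (x + t • v)) =o[𝓝[>] 0] fun t ↦ t ^ 2 := by
  refine (hf.comp_tendsto (tendsto_add_smul_nhdsGT_zero x v)).trans_isBigO
    (.of_bound (‖v‖ ^ 2) (.of_forall fun t ↦ ?_))
  simp [norm_smul, mul_pow, mul_comm]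

variable [NormedSpace ℝ F]

lemma snd_fderiv_eq_zero_of_isLittleO_sq {f : E → F} {f' : E → E →L[ℝ] F}
    {f'' : E →L[ℝ] E →L[ℝ] F} {x : E} (hf : ∀ᶠ y in 𝓝 x, HasFDerivAt f (f' y) y)
    (hf' : HasFDerivAt f' f'' x) (ho : f =o[𝓝 x] fun y ↦ ‖y - x‖ ^ 2) : f'' = 0 := by
  obtain ⟨r, hr, hball⟩ := Metric.eventually_nhds_iff_ball.1 hf
  have hmem (u : E) : ∀ᶠ c : ℝ in 𝓝[>] 0, x + (4 : ℝ) • c • u ∈ interior (Metric.ball x r) := by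
    simp only [smul_comm (4 : ℝ)]
    exact tendsto_add_smul_nhdsGT_zero x _ (interior_mem_nhds.2 (Metric.ball_mem_nhds x hr))
  ext v w
  obtain ⟨c, ⟨hv, hw⟩, hc⟩ := ((hmem v).and (hmem w)).and self_mem_nhdsWithin |>.exists
  -- `f'' (c • v) (c • w)` is the limit of `t⁻²` times an alternating sum of four values of `f`,
  -- each of which is `o(t²)`.
  have hdiff := (convex_ball x r).isLittleO_alternate_sum_square (f'' := f'')
    (fun y hy ↦ hball y (interior_subset hy)) (Metric.mem_ball_self hr) hf'.hasFDerivWithinAt hv hw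
  have hsmul : (fun t : ℝ ↦ t ^ 2 • f'' (c • v) (c • w)) =o[𝓝[>] 0] fun t ↦ t ^ 2 := by
    have ray := isLittleO_sq_along_ray ho
    exact (((((ray _).add (ray _)).sub (ray _)).sub (ray _)).sub hdiff).congr_left
      fun t ↦ sub_sub_cancel _ _
  have hsq : ∀ᶠ t : ℝ in 𝓝[>] 0, t ^ 2 ≠ 0 := by
    filter_upwards [self_mem_nhdsWithin] with t ht using pow_ne_zero 2 (ne_of_gt ht)
  have hzero : f'' (c • v) (c • w) = 0 := eq_zero_of_smul_const_isLittleO hsq hsmul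
  simpa [ne_of_gt hc] using hzero

end SecondDerivative

section AnisotropicVanishing

variable {E F G : Type*} [NormedAddCommGroup E] [NormedAddCommGroup F] [NormedAddCommGroup G]
  {k : E × F → G}

lemma tendsto_sq_norm_add_norm_zero :
    Tendsto (fun p : E × F ↦ ‖p.1‖ ^ 2 + ‖p.2‖) (𝓝 (0, 0)) (𝓝 0) := by
  have hcont : Continuous fun p : E × F ↦ ‖p.1‖ ^ 2 + ‖p.2‖ := by fun_prop
  simpa using hcont.tendsto (0, 0)

lemma isBigO_sq_norm_add_norm :
    (fun p : E × F ↦ ‖p.1‖ ^ 2 + ‖p.2‖) =O[𝓝 (0, 0)] fun p ↦ p := by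
  have hfst : (fun p : E × F ↦ ‖p.1‖ ^ 2) =O[𝓝 (0, 0)] fun p ↦ p.1 :=
    ((isLittleO_norm_pow_id one_lt_two).comp_tendsto (continuous_fst.tendsto (0, 0))).isBigO
  exact (hfst.trans isBigO_fst_prod').add isBigO_snd_prod'.norm_left

lemma isLittleO_sq_norm_add_norm_of_le_rpow {C ε r : ℝ} (hr : 1 < r) (hε : 0 < ε)
    (hk : ∀ x y, ‖x‖ < ε → ‖y‖ < ε → ‖k (x, y)‖ ≤ C * (‖x‖ ^ 2 + ‖y‖) ^ r) :
    k =o[𝓝 (0, 0)] fun p ↦ ‖p.1‖ ^ 2 + ‖p.2‖ := by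
  have hbigO : k =O[𝓝 (0, 0)] fun p ↦ (‖p.1‖ ^ 2 + ‖p.2‖) ^ r := by
    refine .of_bound C ?_
    filter_upwards [Metric.ball_mem_nhds _ hε] with p hp
    obtain ⟨hfst, hsnd⟩ : ‖p.1‖ < ε ∧ ‖p.2‖ < ε := by simpa [Prod.dist_eq] using hp
    rw [Real.norm_of_nonneg (by positivity)]
    exact hk p.1 p.2 hfst hsnd
  exact hbigO.trans_isLittleO (isLittleO_rpow_self_of_tendsto_zero hr (fun p ↦ by positivity)
    tendsto_sq_norm_add_norm_zero)

lemma apply_zero_of_isLittleO_sq_norm_add_norm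
    (hk : k =o[𝓝 (0, 0)] fun p ↦ ‖p.1‖ ^ 2 + ‖p.2‖) : k (0, 0) = 0 :=
  hk.isBigO.eq_zero_imp.self_of_nhds (by simp)

variable [NormedSpace ℝ E] [NormedSpace ℝ F] [NormedSpace ℝ G]

lemma hasFDerivAt_zero_of_isLittleO_sq_norm_add_norm
    (hk : k =o[𝓝 (0, 0)] fun p ↦ ‖p.1‖ ^ 2 + ‖p.2‖) :
    HasFDerivAt k (0 : E × F →L[ℝ] G) (0, 0) := by
  rw [hasFDerivAt_iff_isLittleO, apply_zero_of_isLittleO_sq_norm_add_norm hk]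
  simpa [Prod.mk_zero_zero] using hk.trans_isBigO isBigO_sq_norm_add_norm

lemma fderiv_fderiv_inl_inl_eq_zero_of_isLittleO (hk : ContDiffAt ℝ 2 k (0, 0))
    (ho : k =o[𝓝 (0, 0)] fun p ↦ ‖p.1‖ ^ 2 + ‖p.2‖) (v w : E) :
    fderiv ℝ (fderiv ℝ k) (0, 0) (v, 0) (w, 0) = 0 := by
  have hslice : Tendsto (fun x : E ↦ (x, (0 : F))) (𝓝 0) (𝓝 (0, 0)) :=
    (continuous_id.prodMk continuous_const).tendsto 0
  have hf : ∀ᶠ x : E in 𝓝 0, HasFDerivAt (fun x ↦ k (x, 0))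
      ((fderiv ℝ k (x, 0)).comp (.inl ℝ E F)) x := by
    filter_upwards [hslice.eventually (hk.eventually (by simp))] with x hx
    exact (hx.differentiableAt (by simp)).hasFDerivAt.comp x (hasFDerivAt_prodMk_left x 0)
  have hdiff : DifferentiableAt ℝ (fderiv ℝ k) (0, 0) :=
    (hk.fderiv_right (m := 1) le_rfl).differentiableAt one_ne_zero
  have hf' : HasFDerivAt (fun x : E ↦ (fderiv ℝ k (x, 0)).comp (.inl ℝ E F)) _ 0 :=
    (hdiff.hasFDerivAt.comp (0 : E) (hasFDerivAt_prodMk_left (0 : E) (0 : F))).clm_comp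
      (hasFDerivAt_const (ContinuousLinearMap.inl ℝ E F) (0 : E))
  have hof : (fun x : E ↦ k (x, 0)) =o[𝓝 0] fun x ↦ ‖x - 0‖ ^ 2 := by
    simpa [Function.comp_def] using ho.comp_tendsto hslice
  have hzero := snd_fderiv_eq_zero_of_isLittleO_sq hf hf' hof
  simpa using DFunLike.congr_fun (DFunLike.congr_fun hzero v) w

theorem statement15_general (hk : ContDiffAt ℝ 2 k (0, 0))
    (ho : k =o[𝓝 (0, 0)] fun p ↦ ‖p.1‖ ^ 2 + ‖p.2‖) :
    k (0, 0) = 0 ∧ fderiv ℝ k (0, 0) = 0 ∧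
      ∀ v w : E, fderiv ℝ (fun p ↦ fderiv ℝ k p (v, 0)) (0, 0) (w, 0) = 0 := by
  refine ⟨apply_zero_of_isLittleO_sq_norm_add_norm ho,
    (hasFDerivAt_zero_of_isLittleO_sq_norm_add_norm ho).fderiv, fun v w ↦ ?_⟩
  have hdiff : DifferentiableAt ℝ (fderiv ℝ k) (0, 0) :=
    (hk.fderiv_right (m := 1) le_rfl).differentiableAt one_ne_zero
  simpa [fderiv_clm_apply hdiff (differentiableAt_const (v, (0 : F)))] using
    fderiv_fderiv_inl_inl_eq_zero_of_isLittleO hk ho w v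

end AnisotropicVanishing

/-- If `k` is smooth with `k(h,Z) = O((h² + |Z|)^{3/2})` near `(0,0)`, then `k(0,0) = 0`,
`∂₁k(0,0) = ∂₂k(0,0) = 0` and `∂₁²k(0,0) = 0`. -/
theorem statement15 (k : ℝ × ℝ → ℝ) (hk : ContDiff ℝ (⊤ : ℕ∞) k)
    (hO : ∃ C > 0, ∃ ε > 0, ∀ h Z : ℝ, |h| < ε → |Z| < ε →
      |k (h, Z)| ≤ C * (h ^ 2 + |Z|) ^ ((3 : ℝ) / 2)) :
    k (0, 0) = 0 ∧
    fderiv ℝ k (0, 0) ((1, 0) : ℝ × ℝ) = 0 ∧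
    fderiv ℝ k (0, 0) ((0, 1) : ℝ × ℝ) = 0 ∧
    fderiv ℝ (fun p => fderiv ℝ k p ((1, 0) : ℝ × ℝ)) (0, 0) ((1, 0) : ℝ × ℝ) = 0 := by
  obtain ⟨C, -, ε, hε, hbound⟩ := hO
  have ho := isLittleO_sq_norm_add_norm_of_le_rpow (k := k) (r := 3 / 2) (by norm_num) hε
    (by simpa using hbound)
  obtain ⟨hk₀, hk₁, hk₂⟩ := statement15_general (hk.contDiffAt.of_le (by norm_cast)) ho
  exact ⟨hk₀, by simp [hk₁], by simp [hk₁], hk₂ 1 1⟩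
end
end

section
/- Let k : ℝ² → ℝ be a smooth function such that k(h,Z) = O((h² + |Z|)^{3/2}) as (h,Z) → (0,0). Then there exist real constants υ₁, υ₂ with the following property: for every C̃ > 0 there exist C > 0 and h₀ > 0 such that for all h ∈ (0,h₀) and all integers m ≥ 1 satisfying (2m−1)h² ≤ C̃h, one has |k(h, (2m−1)h²) − υ₁(m − 1/2)h³ − υ₂(m − 1/2)²h⁴| ≤ C h³. -/
noncomputable section

/-!
The weight `h² + |Z|` is `O(‖(h, Z)‖)`, so `k = o(h² + |Z|)` forces `k` and its first derivative to
vanish at the origin; on the axis `Z = 0` it reads `k(h, 0) = o(h²)`, which removes the `h²` term as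
well. The second-order Taylor polynomial of `k` is therefore `q h Z + r Z²`. In a cone `|Z| ≤ D |h|`
the Taylor remainder `O(‖(h, Z)‖³)` is `O(|h|³)`, and substituting `Z = (2m - 1) h²` gives
`υ₁ = 2q` and `υ₂ = 4r`.
-/

section

open Asymptotics Filter Topology

variable {E E' F : Type*} [NormedAddCommGroup E] [NormedAddCommGroup E'] [NormedAddCommGroup F]

theorem isLittleO_rpow_self {s : ℝ} (hs : 1 < s) : (fun x : ℝ => x ^ s) =o[𝓝 0] fun x => x := by
  have hderiv : HasDerivAt (fun x : ℝ => x ^ s) 0 0 := by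
    simpa [Real.zero_rpow (sub_pos.2 hs).ne'] using
      Real.hasDerivAt_rpow_const (x := 0) (Or.inr hs.le)
  simpa [Real.zero_rpow (zero_lt_one.trans hs).ne'] using hderiv.isLittleO

theorem eq_zero_of_pow_smul_isLittleO [NormedSpace ℝ F] {n : ℕ} {q : F}
    (h : (fun t : ℝ => t ^ n • q) =o[𝓝 0] fun t => t ^ n) : q = 0 := by
  have hne : ∀ᶠ t : ℝ in 𝓝[≠] 0, t ^ n ≠ 0 :=
    eventually_mem_nhdsWithin.mono fun t ht => pow_ne_zero n ht
  have hconst : (fun _ : ℝ => q) =o[𝓝[≠] 0] fun _ => (1 : ℝ) :=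
    ((isBigO_refl (fun t : ℝ => (t ^ n)⁻¹) _).smul_isLittleO (h.mono nhdsWithin_le_nhds)).congr'
      (hne.mono fun t ht => inv_smul_smul₀ ht q) (hne.mono fun t ht => inv_mul_cancel₀ ht)
  exact isLittleO_const_const_iff.1 hconst

theorem exists_norm_le_of_isBigO_norm_pow_of_cone {f : E × E' → F} {n : ℕ}
    (hf : f =O[𝓝 0] fun v => ‖v‖ ^ n) (D : ℝ) :
    ∃ C > 0, ∃ δ > 0, ∀ x y, ‖x‖ < δ → ‖y‖ ≤ D * ‖x‖ → ‖f (x, y)‖ ≤ C * ‖x‖ ^ n := by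
  obtain ⟨K, hK, hbound⟩ := hf.exists_pos
  obtain ⟨ε, hε, hball⟩ := Metric.eventually_nhds_iff_ball.1 hbound.bound
  refine ⟨K * (1 + |D|) ^ n, by positivity, ε / (1 + |D|), by positivity, fun x y hx hy => ?_⟩
  have hnorm : ‖(x, y)‖ ≤ (1 + |D|) * ‖x‖ := by
    have hDx : D * ‖x‖ ≤ |D| * ‖x‖ := by gcongr; exact le_abs_self D
    rw [Prod.norm_mk]
    exact max_le (by nlinarith [abs_nonneg D, norm_nonneg x]) (by linarith [norm_nonneg x])
  have hmem : (x, y) ∈ Metric.ball (0 : E × E') ε := by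
    rw [mem_ball_zero_iff]
    exact hnorm.trans_lt ((lt_div_iff₀' (by positivity)).1 hx)
  calc ‖f (x, y)‖ ≤ K * ‖(x, y)‖ ^ n := by simpa only [norm_pow, norm_norm] using hball _ hmem
    _ ≤ K * ((1 + |D|) * ‖x‖) ^ n := by gcongr
    _ = K * (1 + |D|) ^ n * ‖x‖ ^ n := by rw [mul_pow, mul_assoc]

section Taylor

variable [NormedSpace ℝ E] [NormedSpace ℝ F] {f : E → F} {a : E}

theorem isBigO_norm_pow_succ_of_hasFDerivAt {f' : E → E →L[ℝ] F} {n : ℕ}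
    (hf : ∀ᶠ x in 𝓝 a, HasFDerivAt f (f' x) x) (hf' : f' =O[𝓝 a] fun x => ‖x - a‖ ^ n) :
    (fun x => f x - f a) =O[𝓝 a] fun x => ‖x - a‖ ^ (n + 1) := by
  obtain ⟨K, hK, hbound⟩ := hf'.exists_pos
  obtain ⟨ε, hε, hball⟩ := Metric.eventually_nhds_iff_ball.1 (hf.and hbound.bound)
  refine .of_bound K ?_
  filter_upwards [Metric.ball_mem_nhds a hε] with x hx
  have hsubset : Metric.closedBall a ‖x - a‖ ⊆ Metric.ball a ε :=
    Metric.closedBall_subset_ball (by rwa [← dist_eq_norm])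
  have hderiv : ∀ y ∈ Metric.closedBall a ‖x - a‖, ‖f' y‖ ≤ K * ‖x - a‖ ^ n := fun y hy => by
    have hle : ‖y - a‖ ≤ ‖x - a‖ := by rwa [← dist_eq_norm]
    calc ‖f' y‖ ≤ K * ‖y - a‖ ^ n := by simpa using (hball y (hsubset hy)).2
      _ ≤ K * ‖x - a‖ ^ n := by gcongr
  have hmvt := (convex_closedBall a ‖x - a‖).norm_image_sub_le_of_norm_hasFDerivWithin_le
    (fun y hy => (hball y (hsubset hy)).1.hasFDerivWithinAt) hderiv
    (Metric.mem_closedBall_self (norm_nonneg _)) (by simp [dist_eq_norm] : x ∈ _)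
  simpa [pow_succ, mul_assoc] using hmvt

theorem hasFDerivAt_half_smul_apply_sub_apply_sub {B : E →L[ℝ] E →L[ℝ] F}
    (hB : ∀ v w, B v w = B w v) (a x : E) :
    HasFDerivAt (fun y => (1 / 2 : ℝ) • B (y - a) (y - a)) (B (x - a)) x := by
  have hsub : HasFDerivAt (fun y => y - a) (.id ℝ E) x := (hasFDerivAt_id x).sub_const a
  refine (((B.hasFDerivAt.comp x hsub).clm_apply hsub).const_smul (1 / 2 : ℝ)).congr_fderiv ?_
  ext w
  simp [hB w, ← two_smul ℝ, smul_smul]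

theorem isBigO_sub_taylor_two (hf : ContDiffAt ℝ 3 f a) :
    (fun x => f x - f a - fderiv ℝ f a (x - a) -
      (1 / 2 : ℝ) • fderiv ℝ (fderiv ℝ f) a (x - a) (x - a)) =O[𝓝 a] fun x => ‖x - a‖ ^ 3 := by
  set A := fderiv ℝ f a
  set B := fderiv ℝ (fderiv ℝ f) a
  have hf₁ : ContDiffAt ℝ 2 (fderiv ℝ f) a := hf.fderiv_right (by norm_num)
  have hf₂ : ContDiffAt ℝ 1 (fderiv ℝ (fderiv ℝ f)) a := hf₁.fderiv_right (by norm_num)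
  have hsymm : ∀ v w, B v w = B w v := hf.isSymmSndFDerivAt (by norm_num)
  have hderiv : ∀ᶠ x in 𝓝 a, HasFDerivAt f (fderiv ℝ f x) x :=
    (hf.eventually (by simp)).mono fun x hx => (hx.differentiableAt (by simp)).hasFDerivAt
  have hderiv₁ : ∀ᶠ x in 𝓝 a, HasFDerivAt (fderiv ℝ f) (fderiv ℝ (fderiv ℝ f) x) x :=
    (hf₁.eventually (by simp)).mono fun x hx => (hx.differentiableAt (by simp)).hasFDerivAt
  have hO₂ : (fun x => fderiv ℝ (fderiv ℝ f) x - B) =O[𝓝 a] fun x => ‖x - a‖ ^ 1 := by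
    simpa using (hf₂.differentiableAt (by simp)).isBigO_sub.norm_right
  have hO₁ : (fun x => fderiv ℝ f x - A - B (x - a)) =O[𝓝 a] fun x => ‖x - a‖ ^ 2 := by
    simpa [A] using isBigO_norm_pow_succ_of_hasFDerivAt (hderiv₁.mono fun x hx =>
      (hx.sub_const A).sub (B.hasFDerivAt.comp x ((hasFDerivAt_id x).sub_const a))) hO₂
  simpa using isBigO_norm_pow_succ_of_hasFDerivAt (hderiv.mono fun x hx =>
    ((hx.sub_const (f a)).sub (A.hasFDerivAt.comp x ((hasFDerivAt_id x).sub_const a))).sub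
      (hasFDerivAt_half_smul_apply_sub_apply_sub hsymm a x)) hO₁

theorem fderiv_fderiv_apply_self_eq_zero_of_isLittleO (hf : ContDiffAt ℝ 3 f a) (ha : f a = 0)
    (hderiv : fderiv ℝ f a = 0) {v : E}
    (hv : (fun t : ℝ => f (a + t • v)) =o[𝓝 0] fun t => t ^ 2) :
    fderiv ℝ (fderiv ℝ f) a v v = 0 := by
  have hline : Tendsto (fun t : ℝ => a + t • v) (𝓝 0) (𝓝 a) :=
    Continuous.tendsto' (by fun_prop) _ _ (by simp)
  have hcube : (fun t : ℝ => ‖a + t • v - a‖ ^ 3) =o[𝓝 0] fun t => t ^ 2 := by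
    have hbound : (fun t : ℝ => ‖a + t • v - a‖ ^ 3) =O[𝓝 0] fun t => t ^ 3 :=
      .of_bound (‖v‖ ^ 3) (.of_forall fun t => by simp [norm_smul, mul_pow, mul_comm])
    exact hbound.trans_isLittleO (isLittleO_pow_pow (by norm_num))
  have hquad := hv.sub (((isBigO_sub_taylor_two hf).comp_tendsto hline).trans_isLittleO hcube)
  have hhalf : (1 / 2 : ℝ) • fderiv ℝ (fderiv ℝ f) a v v = 0 :=
    eq_zero_of_pow_smul_isLittleO (n := 2) <| hquad.congr_left fun t => by
      simp only [Function.comp_apply, ha, hderiv, add_sub_cancel_left, map_smul, smul_apply,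
        zero_apply, sub_zero, sub_sub_cancel, smul_smul]
      congr 1
      ring
  simpa using hhalf

end Taylor

theorem isBigO_sq_fst_add_abs_snd :
    (fun v : ℝ × ℝ => v.1 ^ 2 + |v.2|) =O[𝓝 0] fun v => v := by
  have hfst : (fun v : ℝ × ℝ => v.1) =O[𝓝 0] fun v => v := isBigO_fst_prod'
  have hsnd : (fun v : ℝ × ℝ => v.2) =O[𝓝 0] fun v => v := isBigO_snd_prod'
  have hsq : (fun v : ℝ × ℝ => v.1 ^ 2) =O[𝓝 0] fun v => v.1 :=
    (isLittleO_pow_id one_lt_two).isBigO.comp_tendsto (continuous_fst.tendsto' _ _ rfl)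
  exact (hsq.trans hfst).add hsnd.abs_left

theorem isLittleO_sq_add_abs_of_bound_rpow {k : ℝ × ℝ → F} {s : ℝ} (hs : 1 < s)
    (hk : ∃ C > 0, ∃ ε > 0, ∀ h Z : ℝ, |h| < ε → |Z| < ε →
      ‖k (h, Z)‖ ≤ C * (h ^ 2 + |Z|) ^ s) :
    k =o[𝓝 0] fun v => v.1 ^ 2 + |v.2| := by
  obtain ⟨C, -, ε, hε, hk⟩ := hk
  have hbigO : k =O[𝓝 0] fun v => (v.1 ^ 2 + |v.2|) ^ s := by
    refine .of_bound C ?_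
    filter_upwards [Metric.ball_mem_nhds 0 hε] with v hv
    obtain ⟨hv₁, hv₂⟩ : |v.1| < ε ∧ |v.2| < ε := by simpa [Prod.norm_def] using hv
    rw [Real.norm_of_nonneg (by positivity)]
    exact hk v.1 v.2 hv₁ hv₂
  exact hbigO.trans_isLittleO <| (isLittleO_rpow_self hs).comp_tendsto <|
    Continuous.tendsto' (by fun_prop) _ _ (by simp)

variable [NormedSpace ℝ F]

theorem exists_isBigO_sub_mul_smul_sub_sq_smul {k : ℝ × ℝ → F} (hk : ContDiffAt ℝ 3 k 0)
    (hsmall : k =o[𝓝 0] fun v => v.1 ^ 2 + |v.2|) :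
    ∃ q r : F, (fun v => k v - (v.1 * v.2) • q - v.2 ^ 2 • r) =O[𝓝 0] fun v => ‖v‖ ^ 3 := by
  have hlinear : k =o[𝓝 0] fun v => v := hsmall.trans_isBigO isBigO_sq_fst_add_abs_snd
  have hzero : k 0 = 0 := hlinear.isBigO.eq_zero_imp.self_of_nhds rfl
  have hderiv : fderiv ℝ k 0 = 0 :=
    (HasFDerivAt.of_isLittleO (by simpa [hzero] using hlinear)).fderiv
  have haxis : (fun t : ℝ => k (0 + t • (1, 0))) =o[𝓝 0] fun t => t ^ 2 := by
    simpa [Function.comp_def] using hsmall.comp_tendsto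
      (Continuous.tendsto' (by fun_prop) (0 : ℝ) _ (by simp) :
        Tendsto (fun t : ℝ => (0 : ℝ × ℝ) + t • (1, 0)) (𝓝 0) (𝓝 0))
  set B := fderiv ℝ (fderiv ℝ k) 0
  have hsymm : B (0, 1) (1, 0) = B (1, 0) (0, 1) := hk.isSymmSndFDerivAt (by norm_num) _ _
  have hpure : B (1, 0) (1, 0) = 0 :=
    fderiv_fderiv_apply_self_eq_zero_of_isLittleO hk hzero hderiv haxis
  have hquad (v : ℝ × ℝ) : (1 / 2 : ℝ) • B v v =
      (v.1 * v.2) • B (1, 0) (0, 1) + v.2 ^ 2 • ((1 / 2 : ℝ) • B (0, 1) (0, 1)) := by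
    have hv : v = v.1 • (1, 0) + v.2 • (0, 1) := by simp
    conv_lhs => rw [hv]
    simp only [map_add, map_smul, add_apply, smul_apply, hsymm, hpure]
    module
  refine ⟨B (1, 0) (0, 1), (1 / 2 : ℝ) • B (0, 1) (0, 1), ?_⟩
  refine ((isBigO_sub_taylor_two hk).congr_left fun v => ?_).congr_right fun v => by rw [sub_zero]
  rw [hzero, hderiv, sub_zero, sub_zero, zero_apply, sub_zero, hquad, sub_sub]

theorem statement16_general {k : ℝ × ℝ → F} (hk : ContDiffAt ℝ 3 k 0)
    (hsmall : k =o[𝓝 0] fun v => v.1 ^ 2 + |v.2|) :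
    ∃ υ₁ υ₂ : F, ∀ D : ℝ, ∃ C > 0, ∃ h₀ > 0, ∀ h : ℝ, |h| < h₀ → ∀ x : ℝ,
      |(2 * x - 1) * h ^ 2| ≤ D * |h| →
        ‖k (h, (2 * x - 1) * h ^ 2) - ((x - 1 / 2) * h ^ 3) • υ₁ -
          ((x - 1 / 2) ^ 2 * h ^ 4) • υ₂‖ ≤ C * |h| ^ 3 := by
  obtain ⟨q, r, hqr⟩ := exists_isBigO_sub_mul_smul_sub_sq_smul hk hsmall
  refine ⟨(2 : ℝ) • q, (4 : ℝ) • r, fun D => ?_⟩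
  obtain ⟨C, hC, h₀, hh₀, hbound⟩ := exists_norm_le_of_isBigO_norm_pow_of_cone hqr D
  refine ⟨C, hC, h₀, hh₀, fun h hh x hx => ?_⟩
  have hle := hbound h _ hh hx
  rw [Real.norm_eq_abs] at hle
  convert hle using 2
  module

end

/-- Taylor-expansion estimate: if `k` is smooth with `k(h,Z) = O((h² + |Z|)^{3/2})` near
`(0,0)`, then there are constants `υ₁, υ₂` such that for every `C̃ > 0` there are `C > 0`
and `h₀ > 0` with
`|k(h,(2m−1)h²) − υ₁(m−1/2)h³ − υ₂(m−1/2)²h⁴| ≤ Ch³`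
for all `h ∈ (0,h₀)` and all integers `m ≥ 1` with `(2m−1)h² ≤ C̃h`. -/
theorem statement16 (k : ℝ × ℝ → ℝ) (hk : ContDiff ℝ (⊤ : ℕ∞) k)
    (hO : ∃ C > 0, ∃ ε > 0, ∀ h Z : ℝ, |h| < ε → |Z| < ε →
      |k (h, Z)| ≤ C * (h ^ 2 + |Z|) ^ ((3 : ℝ) / 2)) :
    ∃ υ₁ υ₂ : ℝ, ∀ Ctilde > (0 : ℝ), ∃ C > (0 : ℝ), ∃ h₀ > (0 : ℝ),
      ∀ h : ℝ, 0 < h → h < h₀ → ∀ m : ℕ, 1 ≤ m →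
        (2 * (m : ℝ) - 1) * h ^ 2 ≤ Ctilde * h →
        |k (h, (2 * (m : ℝ) - 1) * h ^ 2) - υ₁ * ((m : ℝ) - 1/2) * h ^ 3 -
            υ₂ * ((m : ℝ) - 1/2) ^ 2 * h ^ 4| ≤ C * h ^ 3 := by
  obtain ⟨υ₁, υ₂, hυ⟩ := statement16_general (contDiff_infty.1 hk 3).contDiffAt
    (isLittleO_sq_add_abs_of_bound_rpow (by norm_num) hO)
  refine ⟨υ₁, υ₂, fun D _ => ?_⟩
  obtain ⟨C, hC, h₀, hh₀, hbound⟩ := hυ D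
  refine ⟨C, hC, h₀, hh₀, fun h hpos hlt m hm hmh => ?_⟩
  have hm' : (1 : ℝ) ≤ m := mod_cast hm
  have hZ : |(2 * (m : ℝ) - 1) * h ^ 2| ≤ D * |h| := by
    rwa [abs_of_pos hpos, abs_of_nonneg (mul_nonneg (by linarith) (sq_nonneg h))]
  have hle := hbound h (by rwa [abs_of_pos hpos]) m hZ
  rw [Real.norm_eq_abs, abs_of_pos hpos, smul_eq_mul, smul_eq_mul] at hle
  convert hle using 3 <;> ring
end
end
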